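/- arXiv:1504.01428 — 6 statements merged into one kernel-verified Lean document; each statement's English description precedes it below -/
import Mathlib

section
/- Let C be a nonempty, convex and compact subset of ℝⁿ, let K : C ⇉ C be a lower semicontinuous set-valued map with convex and nonempty images such that the set fix K = {x ∈ C : x ∈ K(x)} is closed, and let f : C × C → ℝ satisfy: (i) the sublevel set {(x,y) ∈ C × C : f(x,y) ≤ 0} is closed; (ii) for every x ∈ C the function y ↦ f(x,y) is quasiconcave on K(x); (iii) f(x,x) ≤ 0 for all x ∈ C. Then there exists x ∈ C with x ∈ K(x) such that f(x,y) ≤ 0 for all y ∈ K(x). -/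
open Set Filter Topology Metric
open scoped Pointwise
set_option linter.unusedSectionVars false

section QE
variable {E : Type*} [NormedAddCommGroup E] [InnerProductSpace ℝ E] [FiniteDimensional ℝ E]

theorem qe_proper_sep {S : Set E} (hS : Convex ℝ S) (hne : S.Nonempty) {z : E} (hz : z ∉ S) :
    ∃ p : StrongDual ℝ E, (∀ y ∈ S, p y ≤ p z) ∧ ∃ y ∈ S, p y < p z := by
  set V : Submodule ℝ E := vectorSpan ℝ S with hV
  obtain ⟨s0, hs0⟩ := hne
  let T : Set E := S + (Vᗮ : Set E)
  have hT : Convex ℝ T := hS.add (Vᗮ).convex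
  have hST : S ⊆ T := fun s hs => ⟨s, hs, 0, Vᗮ.zero_mem, by simp⟩
  by_cases hzT : z ∈ T
  · obtain ⟨s, hs, w, hw, rfl⟩ := hzT
    have hw0 : w ≠ 0 := by
      rintro rfl
      exact hz (by simpa using hs)
    have hpos : 0 < inner ℝ w w := by
      rw [real_inner_self_eq_norm_sq]; positivity
    have key : ∀ y ∈ S, innerSL ℝ w y < innerSL ℝ w (s + w) := by
      intro y hy
      have h1 : y - s ∈ V := vsub_mem_vectorSpan ℝ hy hs
      have h2 : inner ℝ w (y - s) = 0 := by
        rw [real_inner_comm]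
        exact (Submodule.mem_orthogonal V w).1 hw _ h1
      rw [inner_sub_right] at h2
      simp only [innerSL_apply_apply, inner_add_right]
      linarith
    exact ⟨innerSL ℝ w, fun y hy => (key y hy).le, s, hs, key s hs⟩
  · have hint : (interior T).Nonempty := by
      rw [hT.interior_nonempty_iff_affineSpan_eq_top,
        ← AffineSubspace.direction_eq_top_iff_of_nonempty ⟨s0, subset_affineSpan ℝ _ (hST hs0)⟩,
        direction_affineSpan, eq_top_iff, ← Submodule.sup_orthogonal_of_hasOrthogonalProjection (K := V)]
      refine sup_le (vectorSpan_mono ℝ hST) fun w hw => ?_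
      have := vsub_mem_vectorSpan ℝ (show s0 + w ∈ T from ⟨s0, hs0, w, hw, rfl⟩) (hST hs0)
      simpa using this
    obtain ⟨p, hp0, hp⟩ := geometric_hahn_banach_of_nonempty_interior_point hT
      (fun h => hzT (interior_subset h)) hint
    refine ⟨p, fun y hy => hp y (hST hy), ?_⟩
    by_contra! hcon
    have heq : ∀ y ∈ S, p y = p z := fun y hy => le_antisymm (hp y (hST hy)) (hcon y hy)
    apply hp0
    have hVk : V ≤ LinearMap.ker (p : E →ₗ[ℝ] ℝ) := by
      rw [hV, vectorSpan_def, Submodule.span_le]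
      rintro _ ⟨a, ha, b, hb, rfl⟩
      simp [heq a ha, heq b hb]
    have hWk : Vᗮ ≤ LinearMap.ker (p : E →ₗ[ℝ] ℝ) := by
      intro w hw
      have h1 := hp (s0 + w) ⟨s0, hs0, w, hw, rfl⟩
      have h2 := hp (s0 + -w) ⟨s0, hs0, -w, Vᗮ.neg_mem hw, rfl⟩
      have := heq s0 hs0
      simp only [map_add, map_neg] at h1 h2
      simp only [LinearMap.mem_ker, ContinuousLinearMap.coe_coe]
      linarith
    have := sup_le hVk hWk
    rw [Submodule.sup_orthogonal_of_hasOrthogonalProjection] at this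
    ext x
    simpa using this (Submodule.mem_top (x := x))

/-- lower semicontinuity -/
def QeLsc (G : E → Set E) : Prop := ∀ A : Set E, IsOpen A → IsOpen {x | (G x ∩ A).Nonempty}

open Classical in
theorem QeLsc.restrict {G : E → Set E} (hG : QeLsc G) {F : Set E} (hF : IsClosed F)
    {O : Set (E × E)} (hO : IsOpen O) :
    QeLsc (fun x => if x ∈ F then G x ∩ {y | (x, y) ∈ O} else G x) := by
  intro A hA
  rw [isOpen_iff_mem_nhds]
  intro x0 hx0
  by_cases h : x0 ∈ F
  · simp only [mem_ofPred_eq, h, if_true] at hx0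
    obtain ⟨y, ⟨hy, hyO⟩, hyA⟩ := hx0
    obtain ⟨u, v, hu, hv, hxu, hyv, huv⟩ := isOpen_prod_iff.1 hO x0 y hyO
    filter_upwards [hu.mem_nhds hxu,
      (hG (A ∩ v) (hA.inter hv)).mem_nhds ⟨y, hy, hyA, hyv⟩] with x hx hx'
    obtain ⟨y', h1, h2, h3⟩ := hx'
    split_ifs
    · exact ⟨y', ⟨h1, huv ⟨hx, h3⟩⟩, h2⟩
    · exact ⟨y', h1, h2⟩
  · simp only [mem_ofPred_eq, h, if_false] at hx0
    filter_upwards [hF.isOpen_compl.mem_nhds h, (hG A hA).mem_nhds hx0] with x hx hx'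
    simpa only [mem_ofPred_eq, show x ∉ F from hx, if_false] using hx'

theorem QeLsc.approx {G : E → Set E} (hG : QeLsc G) (hc : ∀ x, Convex ℝ (G x))
    (hne : ∀ x, (G x).Nonempty) {ε : ℝ} (hε : 0 < ε) :
    ∃ g : E → E, Continuous g ∧ ∀ x, ∃ y ∈ G x, dist (g x) y < ε := by
  obtain ⟨g, hg⟩ := exists_continuous_forall_mem_convex_of_local_const
    (t := fun x => thickening ε (G x)) (fun x => (hc x).thickening ε) (fun x => by
      obtain ⟨y, hy⟩ := hne x
      refine ⟨y, ?_⟩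
      filter_upwards [(hG (ball y ε) isOpen_ball).mem_nhds ⟨y, hy, mem_ball_self hε⟩] with x' hx'
      obtain ⟨y', h1, h2⟩ := hx'
      exact mem_thickening_iff.2 ⟨y', h1, by rwa [dist_comm]⟩)
  exact ⟨g, g.continuous, fun x => mem_thickening_iff.1 (hg x)⟩

theorem QeLsc.step {G : E → Set E} (hG : QeLsc G) (hc : ∀ x, Convex ℝ (G x))
    {g : E → E} (hgc : Continuous g) {ε ε' : ℝ} (hε' : 0 < ε')
    (hg : ∀ x, ∃ y ∈ G x, dist (g x) y < ε) :
    ∃ g' : E → E, (Continuous g' ∧ ∀ x, ∃ y ∈ G x, dist (g' x) y < ε') ∧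
      ∀ x, dist (g x) (g' x) < ε + ε' := by
  classical
  have hO : IsOpen {q : E × E | dist (g q.1) q.2 < ε} :=
    isOpen_lt (by fun_prop) continuous_const
  have h := hG.restrict isClosed_univ hO
  simp only [mem_univ, if_true, mem_ofPred_eq] at h
  obtain ⟨g', h1, h2⟩ := h.approx (fun x => (hc x).inter (by
    have : {y | dist (g x) y < ε} = ball (g x) ε := by ext; simp [dist_comm]
    rw [this]; exact convex_ball _ _)) hg hε'
  refine ⟨g', ⟨h1, fun x => ?_⟩, fun x => ?_⟩
  · obtain ⟨y, hy, hd⟩ := h2 x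
    exact ⟨y, hy.1, hd⟩
  · obtain ⟨y, ⟨_, hy⟩, hd⟩ := h2 x
    have := dist_triangle_right (g x) (g' x) y
    simp only [mem_ofPred_eq] at hy
    linarith

theorem QeLsc.michael {G : E → Set E} (hG : QeLsc G) (hc : ∀ x, Convex ℝ (G x))
    (hne : ∀ x, (G x).Nonempty) :
    ∃ g : E → E, Continuous g ∧ ∀ x, g x ∈ closure (G x) := by
  let e : ℕ → ℝ := fun k => (1 / 2) ^ k
  have he : ∀ k, 0 < e k := fun k => by positivity
  let P : ℕ → Type _ := fun k => {g : E → E // Continuous g ∧ ∀ x, ∃ y ∈ G x, dist (g x) y < e k}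
  have step : ∀ k (g : P k), ∃ g' : P (k + 1), ∀ x, dist (g.1 x) (g'.1 x) < e k + e (k + 1) := by
    intro k g
    obtain ⟨g', h1, h2⟩ := hG.step hc g.2.1 (he (k + 1)) g.2.2
    exact ⟨⟨g', h1⟩, h2⟩
  choose nxt hnxt using step
  obtain ⟨g0, hg0⟩ := hG.approx hc hne (he 0)
  let u : ∀ k, P k := fun k => Nat.rec ⟨g0, hg0⟩ (fun k g => nxt k g) k
  have hu : ∀ k x, dist ((u k).1 x) ((u (k + 1)).1 x) ≤ 4 / 2 / 2 ^ k := by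
    intro k x
    refine (hnxt k (u k) x).le.trans ?_
    simp only [e, pow_succ, one_div, inv_pow, mul_inv]
    have : (0:ℝ) < (2 ^ k)⁻¹ := by positivity
    rw [div_eq_mul_inv (4/2 : ℝ)]
    linarith
  have hcs : ∀ x, CauchySeq (fun k => (u k).1 x) := fun x =>
    cauchySeq_of_le_geometric_two (C := 4) (hu · x)
  choose g hg using fun x => cauchySeq_tendsto_of_complete (hcs x)
  have hd : ∀ k x, dist ((u k).1 x) (g x) ≤ 4 / 2 ^ k := fun k x =>
    dist_le_of_le_geometric_two_of_tendsto (hu · x) (hg x) k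
  have hlim : Tendsto (fun k : ℕ => (4 : ℝ) / 2 ^ k) atTop (𝓝 0) := by
    have := (tendsto_pow_atTop_nhds_zero_of_lt_one (r := (1/2 : ℝ)) (by norm_num)
      (by norm_num)).const_mul 4
    simpa [div_eq_mul_inv] using this
  refine ⟨g, ?_, fun x => ?_⟩
  · have : TendstoUniformly (fun k x => (u k).1 x) g atTop := by
      rw [Metric.tendstoUniformly_iff]
      intro ε hε
      filter_upwards [hlim.eventually (gt_mem_nhds hε)] with k hk x
      rw [dist_comm]
      exact (hd k x).trans_lt hk
    exact this.continuous (Eventually.frequently (Eventually.of_forall fun k => (u k).2.1))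
  · choose y hy hyd using fun k => (u k).2.2 x
    refine mem_closure_of_tendsto (f := y) (b := atTop) ?_ (Eventually.of_forall hy)
    refine (tendsto_iff_of_dist ?_).1 (hg x)
    refine squeeze_zero (fun _ => dist_nonneg) (fun k => (hyd k).le) ?_
    exact tendsto_pow_atTop_nhds_zero_of_lt_one (by norm_num) (by norm_num)

theorem QeLsc.selection {G : E → Set E} (hG : QeLsc G) (hc : ∀ x, Convex ℝ (G x))
    (hne : ∀ x, (G x).Nonempty) {M : ℝ} (hM : ∀ x, ∀ y ∈ G x, ‖y‖ ≤ M) :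
    ∃ g : E → E, Continuous g ∧ ∀ x, g x ∈ G x := by
  classical
  let c : ℕ → E := TopologicalSpace.denseSeq E
  let B : ℕ × ℕ → Set E := fun m => ball (c m.1) (1 / (m.2 + 1 : ℝ))
  let U : ℕ × ℕ → Set E := fun m => {x | (G x ∩ B m).Nonempty}
  have hU : ∀ m, IsOpen (U m) := fun m => hG _ isOpen_ball
  choose F hFc hFU hFun _ using fun m => (hU m).exists_iUnion_isClosed
  have sel : ∀ (m : ℕ × ℕ) (j : ℕ), ∃ g : E → E, Continuous g ∧
      ∀ x, g x ∈ closure (G x) ∧ (x ∈ F m j → g x ∈ closure (B m)) := by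
    intro m j
    have h := hG.restrict (hFc m j) (isOpen_ball.preimage continuous_snd : IsOpen (Prod.snd ⁻¹' B m))
    obtain ⟨g, h1, h2⟩ := h.michael (fun x => by
      split_ifs
      · exact (hc x).inter (convex_ball _ _)
      · exact hc x) (fun x => by
      split_ifs with hx
      · exact hFU m j hx
      · exact hne x)
    refine ⟨g, h1, fun x => ⟨closure_mono ?_ (h2 x), fun hx => ?_⟩⟩
    · split_ifs
      · exact inter_subset_left
      · exact subset_rfl
    · have := h2 x
      simp only [hx, if_true] at this
      exact closure_mono inter_subset_right this
  choose s hsc hs hsF using sel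
  let q : ℕ → E → E := fun i =>
    s ((Denumerable.ofNat (ℕ × ℕ × ℕ) i).1, (Denumerable.ofNat (ℕ × ℕ × ℕ) i).2.1)
      (Denumerable.ofNat (ℕ × ℕ × ℕ) i).2.2
  let w : ℕ → ℝ := fun i => 1 / 2 / 2 ^ i
  have hw0 : ∀ i, 0 < w i := fun i => by positivity
  have hw : HasSum w 1 := hasSum_geometric_two' 1
  have hqn : ∀ i x, ‖q i x‖ ≤ M := by
    intro i x
    have : closure (G x) ⊆ closedBall 0 M :=
      closure_minimal (fun y hy => by simpa using hM x y hy) isClosed_closedBall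
    simpa using this (hs _ _ x)
  have hbd : ∀ i x, ‖w i • q i x‖ ≤ w i * M := by
    intro i x
    rw [norm_smul, Real.norm_of_nonneg (hw0 i).le]
    exact mul_le_mul_of_nonneg_left (hqn i x) (hw0 i).le
  have hsumM : Summable (fun i => w i * M) := hw.summable.mul_right M
  refine ⟨fun x => ∑' i, w i • q i x, ?_, fun x => ?_⟩
  · exact continuous_tsum (fun i => (hsc _ _).const_smul _) hsumM hbd
  · set z := ∑' i, w i • q i x with hz
    have hzs : HasSum (fun i => w i • q i x) z :=
      (Summable.of_norm_bounded hsumM (fun i => hbd i x)).hasSum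
    by_contra hzG
    obtain ⟨p, hp, y, hy, hpy⟩ := qe_proper_sep (hc x) (hne x) hzG
    have h1 : HasSum (fun i => w i * p (q i x)) (p z) := by
      simpa using p.hasSum hzs
    have h2 : HasSum (fun i => w i * p z) (p z) := by
      simpa using hw.mul_right (p z)
    have hle : ∀ i, p (q i x) ≤ p z := by
      intro i
      have : closure (G x) ⊆ {y | p y ≤ p z} :=
        closure_minimal hp (isClosed_le p.continuous continuous_const)
      exact this (hs _ _ x)
    -- a small ball about y
    have hopen : IsOpen {y | p y < p z} := isOpen_lt p.continuous continuous_const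
    obtain ⟨r, hr, hrb⟩ := Metric.isOpen_iff.1 hopen y hpy
    obtain ⟨b, hb⟩ := exists_nat_one_div_lt (show 0 < r / 2 by linarith)
    obtain ⟨a, ha⟩ := (TopologicalSpace.denseRange_denseSeq E).exists_dist_lt y
      (show (0:ℝ) < 1 / (b + 1) by positivity)
    have hxU : x ∈ U (a, b) := ⟨y, hy, ha⟩
    rw [← hFun (a, b)] at hxU
    obtain ⟨j, hj⟩ := mem_iUnion.1 hxU
    have hlt : p (s (a, b) j x) < p z := by
      have h3 := closure_ball_subset_closedBall (hsF (a, b) j x hj)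
      apply hrb
      rw [mem_closedBall] at h3
      rw [mem_ball]
      have := dist_triangle_right (s (a, b) j x) y (c a)
      simp only at h3
      change dist y (c a) < _ at ha
      linarith
    have hi : p (q (Encodable.encode (a, b, j)) x) < p z := by
      simpa [q] using hlt
    have := hasSum_lt (fun i => mul_le_mul_of_nonneg_left (hle i) (hw0 i).le)
      (mul_lt_mul_of_pos_left hi (hw0 _)) h1 h2
    exact lt_irrefl _ this
end QE

section QB
open MeasureTheory Polynomial
variable {E : Type*} [NormedAddCommGroup E] [InnerProductSpace ℝ E] [FiniteDimensional ℝ E]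
variable [MeasurableSpace E] [BorelSpace E]

/-- `det (1 - t A)` is a polynomial in `t` of bounded degree. -/
theorem qb_det_poly (A : E →L[ℝ] E) : ∃ P : ℝ[X], P.natDegree ≤ Module.finrank ℝ E ∧
    ∀ t : ℝ, P.eval t = (ContinuousLinearMap.id ℝ E - t • A).det := by
  classical
  let b := Module.finBasis ℝ E
  let M := LinearMap.toMatrix b b (A : E →ₗ[ℝ] E)
  refine ⟨_, by simpa using Polynomial.natDegree_det_X_add_C_le (-M) 1, fun t => ?_⟩
  rw [ContinuousLinearMap.det, ← LinearMap.det_toMatrix b, ← Polynomial.coe_evalRingHom,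
    RingHom.map_det]
  congr 1
  ext i j
  by_cases hij : i = j <;>
    (simp [M, LinearMap.toMatrix_apply, hij, sub_eq_add_neg, add_comm]; exact mul_comm _ _)

theorem qb_normsq_poly (x v : E) : ∃ P : ℝ[X], P.natDegree ≤ 2 ∧
    ∀ t : ℝ, P.eval t = ‖x - t • v‖ ^ 2 := by
  refine ⟨C (‖v‖ ^ 2) * X ^ 2 + C (- 2 * inner ℝ x v) * X + C (‖x‖ ^ 2),
    Polynomial.natDegree_quadratic_le, fun t => ?_⟩
  rw [norm_sub_sq_real, norm_smul, inner_smul_right]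
  simp [mul_pow]
  ring

theorem qb_det_pos (A : E →L[ℝ] E) (hA : ‖A‖ < 1) :
    0 < (ContinuousLinearMap.id ℝ E - A).det := by
  by_contra! hcon
  have hcont : Continuous fun s : ℝ => (ContinuousLinearMap.id ℝ E - s • A).det :=
    ContinuousLinearMap.continuous_det.comp (by fun_prop)
  have h0 : (ContinuousLinearMap.id ℝ E - (0:ℝ) • A).det = 1 := by
    simp [ContinuousLinearMap.det]
  obtain ⟨s, hs, hs0⟩ := intermediate_value_Icc' (zero_le_one' ℝ) hcont.continuousOn
    (show (0:ℝ) ∈ Icc _ _ by rw [h0, one_smul]; exact ⟨hcon, zero_le_one⟩)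
  have hn : ‖s • A‖ < 1 := by
    rw [norm_smul, Real.norm_of_nonneg hs.1]
    nlinarith [hs.1, hs.2, norm_nonneg A]
  obtain ⟨u, hu⟩ := isUnit_one_sub_of_norm_lt_one hn
  have h1 : (1 - s • A : E →L[ℝ] E).det = 0 := hs0
  have h2 : ((1 - s • A : E →L[ℝ] E) * (↑u⁻¹ : E →L[ℝ] E)).det = 1 := by
    rw [← hu, Units.mul_inv]; simp [ContinuousLinearMap.det]
  rw [show ((1 - s • A : E →L[ℝ] E) * (↑u⁻¹ : E →L[ℝ] E)).det = (1 - s • A : E →L[ℝ] E).det *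
    (↑u⁻¹ : E →L[ℝ] E).det from LinearMap.det_comp _ _, h1, zero_mul] at h2
  exact zero_ne_one h2

/-- Change of variables for small `t`. -/
theorem qb_small {f : E → E} (hf : ContDiff ℝ 1 f) {R : ℝ} (hfR : ∀ x, R ≤ ‖x‖ → f x = 0)
    {L : NNReal} (hL : LipschitzWith L f) {t : ℝ} (ht0 : 0 ≤ t) (htL : t * L < 1) (p : E → ℝ) :
    ∫ x in ball 0 R, (ContinuousLinearMap.id ℝ E - t • fderiv ℝ f x).det * p (x - t • f x) =
      ∫ x in ball 0 R, p x := by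
  let h : E → E := fun x => x - t • f x
  have hinj : Function.Injective h := by
    intro x y hxy
    have h1 : x - y = t • (f x - f y) := by
      simp only [h] at hxy
      rw [smul_sub, sub_eq_sub_iff_add_eq_add]
      rw [sub_eq_sub_iff_add_eq_add] at hxy
      rw [hxy, add_comm]
    have h2 : ‖x - y‖ ≤ t * L * ‖x - y‖ := by
      conv_lhs => rw [h1, norm_smul, Real.norm_of_nonneg ht0]
      rw [mul_assoc]
      exact mul_le_mul_of_nonneg_left (hL.norm_sub_le x y) ht0
    have h3 : ‖x - y‖ ≤ 0 := by
      by_contra! h4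
      nlinarith
    exact sub_eq_zero.1 (norm_le_zero_iff.1 h3)
  have hsurj : Function.Surjective h := by
    intro y
    let T : E → E := fun x => y + t • f x
    have hT : ContractingWith (Real.toNNReal t * L) T := by
      refine ⟨by
        rw [← NNReal.coe_lt_coe, NNReal.coe_mul, Real.coe_toNNReal t ht0]
        exact htL, LipschitzWith.of_dist_le_mul fun a b => ?_⟩
      simp only [T, dist_add_left, dist_smul₀, Real.norm_of_nonneg ht0]
      rw [NNReal.coe_mul, Real.coe_toNNReal t ht0, mul_assoc]
      exact mul_le_mul_of_nonneg_left (hL.dist_le_mul a b) ht0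
    refine ⟨hT.fixedPoint T, ?_⟩
    have := hT.fixedPoint_isFixedPt
    simp only [h]
    rw [sub_eq_iff_eq_add]
    exact this.eq.symm
  have hout : ∀ x, x ∉ ball (0:E) R → h x = x := by
    intro x hx
    simp only [mem_ball, dist_zero_right, not_lt] at hx
    simp [h, hfR x hx]
  have himg : h '' ball 0 R = ball 0 R := by
    ext y
    constructor
    · rintro ⟨x, hx, rfl⟩
      by_contra hy
      have := hinj (hout _ hy)
      rw [this] at hy
      exact hy hx
    · intro hy
      obtain ⟨x, rfl⟩ := hsurj y
      refine ⟨x, ?_, rfl⟩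
      by_contra hx
      rw [hout x hx] at hy
      exact hx hy
  have hd : ∀ x ∈ ball (0:E) R, HasFDerivWithinAt h
      (ContinuousLinearMap.id ℝ E - t • fderiv ℝ f x) (ball 0 R) x := by
    intro x _
    exact ((hasFDerivAt_id x).sub
      (((hf.differentiable (by norm_num)) x).hasFDerivAt.const_smul t)).hasFDerivWithinAt
  have := integral_image_eq_integral_abs_det_fderiv_smul volume measurableSet_ball hd
    hinj.injOn p
  rw [himg] at this
  rw [this]
  refine setIntegral_congr_fun measurableSet_ball fun x _ => ?_
  have hpos := qb_det_pos (t • fderiv ℝ f x) (by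
    rw [norm_smul, Real.norm_of_nonneg ht0]
    exact (mul_le_mul_of_nonneg_left (norm_fderiv_le_of_lipschitz ℝ hL) ht0).trans_lt htL)
  simp only [abs_of_pos hpos, smul_eq_mul, h]

theorem qb_integrable {f : E → E} (hf : ContDiff ℝ 1 f) (R t : ℝ) {p : E → ℝ} (hp : Continuous p) :
    IntegrableOn (fun x => (ContinuousLinearMap.id ℝ E - t • fderiv ℝ f x).det * p (x - t • f x))
      (ball 0 R) := by
  have hc : Continuous (fun x =>
      (ContinuousLinearMap.id ℝ E - t • fderiv ℝ f x).det * p (x - t • f x)) := by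
    have h1 := hf.continuous_fderiv (by norm_num)
    have h2 := hf.continuous
    exact (ContinuousLinearMap.continuous_det.comp (by fun_prop)).mul (hp.comp (by fun_prop))
  exact (hc.continuousOn.integrableOn_compact (isCompact_closedBall 0 R)).mono_set
    ball_subset_closedBall

theorem qb_identity {f : E → E} (hf : ContDiff ℝ 1 f) {R : ℝ} (hfR : ∀ x, R ≤ ‖x‖ → f x = 0)
    (p : ℝ[X]) :
    ∫ x in ball 0 R, (ContinuousLinearMap.id ℝ E - fderiv ℝ f x).det * p.eval (‖x - f x‖ ^ 2) =
      ∫ x in ball (0:E) R, p.eval (‖x‖ ^ 2) := by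
  classical
  have hcs : HasCompactSupport f := HasCompactSupport.intro (isCompact_closedBall 0 R) (by
    intro x hx
    simp only [mem_closedBall, dist_zero_right, not_le] at hx
    exact hfR x hx.le)
  obtain ⟨L, hL⟩ := ContDiff.lipschitzWith_of_hasCompactSupport hcs hf (by norm_num)
  let N : ℕ := Module.finrank ℝ E + p.natDegree * 2
  let s : Finset ℕ := Finset.range (N + 1)
  let v : ℕ → ℝ := fun j => 1 / ((L + 1) * (j + 1))
  have hv0 : ∀ j, 0 ≤ v j := fun j => by positivity
  have hv1 : ∀ j, v j * L < 1 := by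
    intro j
    simp only [v]
    rw [one_div, inv_mul_lt_iff₀ (by positivity)]
    have : (0:ℝ) ≤ L := L.2
    have : (0:ℝ) ≤ j := j.cast_nonneg
    nlinarith
  have hvi : Set.InjOn v s := by
    intro i _ j _ hij
    simp only [v, one_div, inv_inj] at hij
    have hL1 : ((L:ℝ) + 1) ≠ 0 := by positivity
    have := mul_left_cancel₀ hL1 hij
    exact_mod_cast add_right_cancel this
  let I : ℝ → E → ℝ := fun t x =>
    (ContinuousLinearMap.id ℝ E - t • fderiv ℝ f x).det * p.eval (‖x - t • f x‖ ^ 2)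
  have hpc : Continuous fun y : E => p.eval (‖y‖ ^ 2) := p.continuous.comp (by fun_prop)
  have hI : ∀ x, I 1 x = ∑ j ∈ s, (Lagrange.basis s v j).eval 1 * I (v j) x := by
    intro x
    obtain ⟨P, hP, hPe⟩ := qb_det_poly (fderiv ℝ f x)
    obtain ⟨Q, hQ, hQe⟩ := qb_normsq_poly x (f x)
    have he : ∀ t, (P * p.comp Q).eval t = I t x := by
      intro t
      simp [I, hPe, hQe]
    have hdeg : (P * p.comp Q).degree < s.card := by
      refine (Polynomial.degree_le_natDegree).trans_lt ?_
      simp only [s, Finset.card_range]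
      have : (P * p.comp Q).natDegree ≤ N := by
        refine natDegree_mul_le.trans (add_le_add hP ?_)
        rw [natDegree_comp]
        exact Nat.mul_le_mul_left _ hQ
      exact_mod_cast Nat.lt_succ_of_le this
    have := congrArg (eval 1) (Lagrange.eq_interpolate hvi hdeg)
    rw [he, Lagrange.interpolate_apply, eval_finsetSum] at this
    rw [this]
    refine Finset.sum_congr rfl fun j _ => ?_
    rw [he]; simp [mul_comm]
  have hsm : ∀ j, ∫ x in ball (0:E) R, I (v j) x = ∫ x in ball (0:E) R, p.eval (‖x‖ ^ 2) :=
    fun j => qb_small hf hfR hL (hv0 j) (hv1 j) (fun y => p.eval (‖y‖ ^ 2))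
  have h1 : ∫ x in ball (0:E) R, I 1 x = ∫ x in ball (0:E) R, p.eval (‖x‖ ^ 2) := by
    simp_rw [hI]
    rw [integral_finsetSum _ fun j _ => (qb_integrable hf R (v j) hpc).const_mul _]
    simp_rw [integral_const_mul]
    rw [Finset.sum_congr rfl fun j _ => congrArg _ (hsm j)]
    rw [← Finset.sum_mul, ← eval_finsetSum, Lagrange.sum_basis hvi ⟨0, by simp [s]⟩]
    simp
  simpa [I] using h1

theorem qb_smooth {f : E → E} (hf : ContDiff ℝ 1 f) {R : ℝ} (hR : 0 < R)
    (hfR : ∀ x, R ≤ ‖x‖ → f x = 0) : ∃ x, f x = x := by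
  by_contra! hne
  have hfc := hf.continuous
  have hcont : Continuous fun x => ‖x - f x‖ ^ 2 := by fun_prop
  have hK : IsCompact (closedBall (0:E) R) := isCompact_closedBall 0 R
  have hKne : (closedBall (0:E) R).Nonempty := ⟨0, by simp [hR.le]⟩
  obtain ⟨x1, _, hx1⟩ := hK.exists_isMinOn hKne hcont.continuousOn
  obtain ⟨x2, _, hx2⟩ := hK.exists_isMaxOn hKne hcont.continuousOn
  have hJc : Continuous fun x => (ContinuousLinearMap.id ℝ E - fderiv ℝ f x).det :=
    ContinuousLinearMap.continuous_det.comp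
      (continuous_const.sub (hf.continuous_fderiv (by norm_num)))
  obtain ⟨J, hJ⟩ := hK.exists_bound_of_continuousOn hJc.continuousOn
  set δ := ‖x1 - f x1‖ ^ 2 with hδ
  have hδ0 : 0 < δ := by
    have : x1 - f x1 ≠ 0 := sub_ne_zero.2 (hne x1).symm
    positivity
  have hJ0 : 0 ≤ J := (norm_nonneg _).trans (hJ 0 (by simp [hR.le]))
  let D := max (‖x2 - f x2‖ ^ 2) (R ^ 2)
  let φ : ℝ → ℝ := fun s => max 0 (δ - s)
  have hφ : Continuous φ := by fun_prop
  let vol : ℝ := volume.real (ball (0:E) R)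
  have hvol : 0 ≤ vol := measureReal_nonneg
  have hφE : Continuous fun x : E => φ (‖x‖ ^ 2) := by fun_prop
  have hint : ∀ {g : E → ℝ}, Continuous g → IntegrableOn g (ball 0 R) := fun hg =>
    (hg.continuousOn.integrableOn_compact hK).mono_set ball_subset_closedBall
  have hIpos : 0 < ∫ x in ball (0:E) R, φ (‖x‖ ^ 2) := by
    have h0 : 0 ≤ᵐ[volume.restrict (ball (0:E) R)] fun x : E => φ (‖x‖ ^ 2) :=
      Eventually.of_forall fun x => le_max_left _ _
    rw [setIntegral_pos_iff_support_of_nonneg_ae h0 (hint hφE)]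
    have hop : IsOpen (Function.support (fun x : E => φ (‖x‖ ^ 2)) ∩ ball 0 R) :=
      hφE.isOpen_support.inter isOpen_ball
    refine hop.measure_pos _ ⟨0, ?_, by simp [hR]⟩
    simp [φ, hδ0]
  set I0 := ∫ x in ball (0:E) R, φ (‖x‖ ^ 2) with hI0
  obtain ⟨η, hη, hηI⟩ : ∃ η : ℝ, 0 < η ∧ η * ((J + 1) * vol) < I0 := by
    refine ⟨I0 / ((J + 1) * vol + 1), by positivity, ?_⟩
    rw [div_mul_eq_mul_div, div_lt_iff₀ (by positivity)]
    nlinarith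
  obtain ⟨p, hp⟩ := exists_polynomial_near_of_continuousOn 0 D φ hφ.continuousOn η hη
  have hid := qb_identity hf hfR p
  have hfin : volume (ball (0:E) R) < ⊤ := measure_ball_lt_top
  have hL : ‖∫ x in ball 0 R,
      (ContinuousLinearMap.id ℝ E - fderiv ℝ f x).det * p.eval (‖x - f x‖ ^ 2)‖ ≤ J * η * vol := by
    refine norm_setIntegral_le_of_norm_le_const hfin fun x hx => ?_
    have hx' := ball_subset_closedBall hx
    rw [norm_mul]
    refine mul_le_mul (hJ x hx') ?_ (norm_nonneg _) hJ0
    have h1 : δ ≤ ‖x - f x‖ ^ 2 := hx1 hx'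
    have h2 : ‖x - f x‖ ^ 2 ≤ D := (show ‖x - f x‖ ^ 2 ≤ _ from hx2 hx').trans (le_max_left _ _)
    have h3 := hp _ ⟨by positivity, h2⟩
    have h4 : φ (‖x - f x‖ ^ 2) = 0 := max_eq_left (by linarith)
    rw [h4, sub_zero] at h3
    exact h3.le
  have hpc : Continuous fun y : E => p.eval (‖y‖ ^ 2) := p.continuous.comp (by fun_prop)
  have hRb : ‖∫ x in ball (0:E) R, (p.eval (‖x‖ ^ 2) - φ (‖x‖ ^ 2))‖ ≤ η * vol := by
    refine norm_setIntegral_le_of_norm_le_const hfin fun x hx => ?_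
    simp only [mem_ball, dist_zero_right] at hx
    have h2 : ‖x‖ ^ 2 ≤ D := (pow_le_pow_left₀ (norm_nonneg _) hx.le 2).trans (le_max_right _ _)
    exact (hp _ ⟨by positivity, h2⟩).le
  rw [integral_sub (hint hpc) (hint hφE), ← hid] at hRb
  rw [Real.norm_eq_abs, abs_le] at hL hRb
  nlinarith [hL.1, hL.2, hRb.1, hRb.2]

theorem qb_brouwer {g : E → E} (hg : Continuous g) {M : ℝ} (hM : ∀ x, ‖g x‖ ≤ M) :
    ∃ x, g x = x := by
  by_contra! hne
  have hM0 : 0 ≤ M := (norm_nonneg _).trans (hM 0)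
  obtain ⟨x1, _, hx1⟩ := (isCompact_closedBall (0:E) (M + 1)).exists_isMinOn
    ⟨0, by simp; linarith⟩ (by fun_prop : Continuous fun x => dist (g x) x).continuousOn
  set ε := dist (g x1) x1
  have hε : 0 < ε := dist_pos.2 (hne x1)
  let t : E → Set E := fun x =>
    {y | (‖x‖ ≤ M + 1 → y ∈ ball (g x) ε) ∧ y ∈ closedBall (0:E) M ∧ (M + 2 ≤ ‖x‖ → y ∈ ({0} : Set E))}
  have ht : ∀ x, Convex ℝ (t x) := by
    intro x a ha b hb c d hc hd hcd
    exact ⟨fun h => convex_ball _ _ (ha.1 h) (hb.1 h) hc hd hcd,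
      convex_closedBall _ _ ha.2.1 hb.2.1 hc hd hcd,
      fun h => convex_singleton _ (ha.2.2 h) (hb.2.2 h) hc hd hcd⟩
  obtain ⟨f, hf⟩ := exists_contMDiffMap_forall_mem_convex_of_local_const
    (modelWithCornersSelf ℝ E) (n := 1) ht (fun x => by
      rcases le_or_gt ‖x‖ (M + 1) with hx | hx
      · refine ⟨g x, ?_⟩
        have h1 : ∀ᶠ y in 𝓝 x, dist (g y) (g x) < ε :=
          (Metric.tendsto_nhds.1 (hg.tendsto x)) ε hε
        have h2 : ∀ᶠ y in 𝓝 x, ‖y‖ < M + 2 :=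
          continuous_norm.continuousAt.eventually (gt_mem_nhds (by linarith))
        filter_upwards [h1, h2] with y hy1 hy2
        exact ⟨fun _ => by rwa [mem_ball, dist_comm], by simpa using hM x, fun h => absurd h (not_le.2 hy2)⟩
      · refine ⟨0, ?_⟩
        have h2 : ∀ᶠ y in 𝓝 x, M + 1 < ‖y‖ :=
          continuous_norm.continuousAt.eventually (lt_mem_nhds hx)
        filter_upwards [h2] with y hy2
        exact ⟨fun h => absurd h (not_le.2 hy2), by simpa using hM0, fun _ => rfl⟩)
  have hfd : ContDiff ℝ 1 f := f.contMDiff.contDiff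
  obtain ⟨x, hx⟩ := qb_smooth hfd (R := M + 2) (by linarith) (fun x hx => (hf x).2.2 hx)
  have h2 : ‖x‖ ≤ M := by simpa [hx] using (hf x).2.1
  have h1 := (hf x).1 (by linarith)
  rw [hx, mem_ball, dist_comm] at h1
  have h3 : ε ≤ dist (g x) x := hx1 (by simp; linarith)
  linarith
end QB

/-- **Theorem (Cubiotti, 1997).** Existence of solutions of a quasiequilibrium problem
in ℝⁿ, where lower semicontinuity of `K` is understood relative to the subspace
topology on `C`. -/
theorem quasiequilibrium_exists_finite_dim
    (n : ℕ) (C : Set (EuclideanSpace ℝ (Fin n)))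
    (hCne : C.Nonempty) (hCconv : Convex ℝ C) (hCcomp : IsCompact C)
    (K : EuclideanSpace ℝ (Fin n) → Set (EuclideanSpace ℝ (Fin n)))
    (hKsub : ∀ x ∈ C, K x ⊆ C)
    (hKconv : ∀ x ∈ C, Convex ℝ (K x))
    (hKne : ∀ x ∈ C, (K x).Nonempty)
    (hKlsc : ∀ A : Set (EuclideanSpace ℝ (Fin n)), IsOpen A →
      IsOpen {x : C | (K (x : EuclideanSpace ℝ (Fin n)) ∩ A).Nonempty})
    (hfix : IsClosed {x | x ∈ C ∧ x ∈ K x})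
    (f : EuclideanSpace ℝ (Fin n) → EuclideanSpace ℝ (Fin n) → ℝ)
    (hsub : IsClosed {p : EuclideanSpace ℝ (Fin n) × EuclideanSpace ℝ (Fin n) |
      p.1 ∈ C ∧ p.2 ∈ C ∧ f p.1 p.2 ≤ 0})
    (hqc : ∀ x ∈ C, QuasiconcaveOn ℝ (K x) (f x))
    (hdiag : ∀ x ∈ C, f x x ≤ 0) :
    ∃ x ∈ C, x ∈ K x ∧ ∀ y ∈ K x, f x y ≤ 0 := by
  classical
  by_contra! hno
  let K' : EuclideanSpace ℝ (Fin n) → Set (EuclideanSpace ℝ (Fin n)) :=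
    fun x => if x ∈ C then K x else C
  have hK'C : ∀ x, K' x ⊆ C := by
    intro x
    by_cases hx : x ∈ C
    · simpa only [K', hx, if_true] using hKsub x hx
    · simp only [K', hx, if_false, subset_rfl]
  have hK' : QeLsc K' := by
    intro A hA
    by_cases hCA : (C ∩ A).Nonempty
    · obtain ⟨W, hW, hWe⟩ := isOpen_induced_iff.1 (hKlsc A hA)
      have : {x | (K' x ∩ A).Nonempty} = W ∪ Cᶜ := by
        ext x
        by_cases hx : x ∈ C
        · have h := Set.ext_iff.1 hWe ⟨x, hx⟩
          change x ∈ W ↔ (K x ∩ A).Nonempty at h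
          change (K' x ∩ A).Nonempty ↔ _
          simp only [K', hx, if_true, mem_union, mem_compl_iff, not_true, or_false, h]
        · change (K' x ∩ A).Nonempty ↔ _
          simp only [K', hx, if_false, mem_union, mem_compl_iff, not_false_iff, or_true, hCA]
      rw [this]
      exact hW.union hCcomp.isClosed.isOpen_compl
    · have : {x | (K' x ∩ A).Nonempty} = ∅ := by
        ext x
        refine ⟨fun h => hCA (h.mono (inter_subset_inter_left _ (hK'C x))), fun h => h.elim⟩
      rw [this]
      exact isOpen_empty
  have hP : ∀ x ∈ {x | x ∈ C ∧ x ∈ K x}, K' x ∩ {y | (x, y) ∈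
      {p : EuclideanSpace ℝ (Fin n) × EuclideanSpace ℝ (Fin n) |
        p.1 ∈ C ∧ p.2 ∈ C ∧ f p.1 p.2 ≤ 0}ᶜ} = {y | y ∈ K x ∧ 0 < f x y} := by
    rintro x ⟨hx, _⟩
    ext y
    change (y ∈ K' x ∧ ¬ (x ∈ C ∧ y ∈ C ∧ f x y ≤ 0)) ↔ (y ∈ K x ∧ 0 < f x y)
    simp only [K', hx, if_true, true_and, not_and, not_le]
    exact ⟨fun h => ⟨h.1, h.2 (hKsub x hx h.1)⟩, fun h => ⟨h.1, fun _ => h.2⟩⟩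
  have hG := hK'.restrict hfix hsub.isOpen_compl
  obtain ⟨M, hM⟩ := hCcomp.isBounded.exists_norm_le
  have hGK : ∀ x y, y ∈ @ite _ (x ∈ {x | x ∈ C ∧ x ∈ K x}) (Classical.propDecidable _) (K' x ∩ {y | (x, y) ∈
      {p : EuclideanSpace ℝ (Fin n) × EuclideanSpace ℝ (Fin n) |
        p.1 ∈ C ∧ p.2 ∈ C ∧ f p.1 p.2 ≤ 0}ᶜ}) (K' x) → y ∈ K' x := by
    intro x y hy
    split_ifs at hy
    · exact hy.1
    · exact hy
  obtain ⟨g, hgc, hg⟩ := hG.selection (fun x => by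
      split_ifs with h
      · rw [hP x h]
        exact (hqc x h.1).convex_gt 0
      · by_cases hx : x ∈ C
        · simpa only [K', hx, if_true] using hKconv x hx
        · simpa only [K', hx, if_false] using hCconv) (fun x => by
      split_ifs with h
      · rw [hP x h]
        obtain ⟨y, hy, hy'⟩ := hno x h.1 h.2
        exact ⟨y, hy, hy'⟩
      · by_cases hx : x ∈ C
        · simpa only [K', hx, if_true] using hKne x hx
        · simpa only [K', hx, if_false] using hCne)
    (M := M) (fun x y hy => hM y (hK'C x (hGK x y hy)))
  have hgC : ∀ x, g x ∈ C := fun x => hK'C x (hGK x _ (hg x))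
  obtain ⟨x, hx⟩ := qb_brouwer hgc (fun x => hM _ (hgC x))
  have hxC : x ∈ C := hx ▸ hgC x
  have hxK : x ∈ K x := by
    have := hGK x _ (hg x)
    rw [hx] at this
    simpa only [K', hxC, if_true] using this
  have h1 := hg x
  have hxf : x ∈ {x | x ∈ C ∧ x ∈ K x} := ⟨hxC, hxK⟩
  rw [hx, if_pos hxf, hP x hxf] at h1
  exact absurd (hdiag x hxC) (not_le.2 h1.2)
end

section
/- Let E be a real Banach space, C a convex and compact nonempty subset of E, K : C ⇉ C a lower semicontinuous set-valued map with convex and nonempty images, and f : C × C → ℝ a bifunction satisfying: (i) for every y ∈ C the function x ↦ f(x,y) is lower semicontinuous; (ii) for every x ∈ C the function y ↦ f(x,y) is quasiconcave; (iii) there exists ε₀ > 0 such that f(x,x) ≤ 0 for all x ∈ C with x ∈ (K(x) + ε₀·B) ∩ C, where B is the open unit ball of E. Then for each ε with 0 < ε < ε₀ there exists a point x_ε belonging to the closure of fix K_ε = {x ∈ C : x ∈ K_ε(x)} such that f(x_ε, y) ≤ 0 for all y ∈ K_ε(x_ε), where K_ε : C ⇉ C is defined by K_ε(x) = (K(x)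 + ε·B) ∩ C. -/
set_option linter.unusedSectionVars false
open Pointwise
namespace ScarfAux
section Comb
open Finset

/-- Dominant finite sets for a family of injective rankings. -/
def Dom {T I : Type*} (r : I → T → ℤ) (S : Finset T) : Prop :=
  ∀ y, ∃ i, ∀ x ∈ S, r i y ≤ r i x

/-- The elements exceeding the minima of all orders but `e`. -/
def Above {T I : Type*} (r : I → T → ℤ) (m : I → T) (e : I) (y : T) : Prop :=
  ∀ i, i ≠ e → r i (m i) < r i y

lemma dom_mono {T I : Type*} {r : I → T → ℤ} {S S' : Finset T} (h : S' ⊆ S) (hS : Dom r S) :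
    Dom r S' := fun y => by
  obtain ⟨i, hi⟩ := hS y
  exact ⟨i, fun x hx => hi x (h hx)⟩

lemma exists_minmap {T I : Type*} (r : I → T → ℤ) (S : Finset T) (hS : S.Nonempty) :
    ∃ m : I → T, ∀ i, m i ∈ S ∧ ∀ x ∈ S, r i (m i) ≤ r i x := by
  have : ∀ i, ∃ x ∈ S, ∀ z ∈ S, r i x ≤ r i z := fun i => S.exists_min_image (r i) hS
  choose m h1 h2 using this
  exact ⟨m, fun i => ⟨h1 i, h2 i⟩⟩

section
variable {T I : Type*} [Fintype T] [Fintype I] [DecidableEq T] [DecidableEq I]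
  {r : I → T → ℤ} (hr : ∀ i, Function.Injective (r i))
  {S : Finset T} {m : I → T} (hm : ∀ i, m i ∈ S ∧ ∀ x ∈ S, r i (m i) ≤ r i x)

include hr hm in
/-- Minimum map of a door identifies exactly one pair. -/
lemma exists_pair (hc : S.card + 1 = Fintype.card I) (hD : Dom r S) :
    ∃ a b, a ≠ b ∧ m a = m b ∧ (∀ e, e = a ∨ e = b → ∀ z ∈ S, ∃ i, i ≠ e ∧ m i = z) := by
  have hsurj : ∀ z ∈ S, ∃ i, m i = z := by
    intro z hz
    obtain ⟨i, hi⟩ := hD z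
    exact ⟨i, hr i (le_antisymm ((hm i).2 z hz) (hi _ (hm i).1))⟩
  obtain ⟨a, -, b, -, hab, hmab⟩ := Finset.exists_ne_map_eq_of_card_lt_of_maps_to
    (s := (univ : Finset I)) (t := S) (f := m) (by rw [Finset.card_univ]; omega)
    (fun i _ => (hm i).1)
  refine ⟨a, b, hab, hmab, ?_⟩
  rintro e he z hz
  obtain ⟨i, hi⟩ := hsurj z hz
  by_cases hie : i = e
  · subst hie
    rcases he with rfl | rfl
    · exact ⟨b, hab.symm, by rw [← hmab, hi]⟩
    · exact ⟨a, hab, by rw [hmab, hi]⟩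
  · exact ⟨i, hie, hi⟩

include hr hm in
lemma insert_dom_forward (hc : S.card + 1 = Fintype.card I)
    {a b : I} (hab : a ≠ b) (hmab : m a = m b) {x : T} (hx : x ∉ S) (hD : Dom r (insert x S)) :
    ∃ e, (e = a ∨ e = b) ∧ Above r m e x ∧ ∀ y, Above r m e y → r e y ≤ r e x := by
  choose g hg using hD
  have hginj : Set.InjOn g (insert x S : Finset T) := by
    intro z hz w hw h
    refine hr (g z) (le_antisymm (hg z w hw) ?_)
    have := hg w z hz
    rwa [← h] at this
  have himg : (insert x S).image g = univ := by
    apply Finset.eq_univ_of_card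
    rw [Finset.card_image_of_injOn hginj, Finset.card_insert_of_notMem hx, hc]
  have hoth : ∀ i, i ≠ g x → g (m i) = i := by
    intro i hi
    have : i ∈ (insert x S).image g := by rw [himg]; exact mem_univ i
    obtain ⟨z, hz, rfl⟩ := Finset.mem_image.1 this
    rcases Finset.mem_insert.1 hz with rfl | hzS
    · exact absurd rfl hi
    · have : m (g z) = z := hr (g z) (le_antisymm ((hm _).2 z hzS)
        (hg z _ (Finset.mem_insert_of_mem (hm _).1)))
      rw [this]
  refine ⟨g x, ?_, ?_, ?_⟩
  · by_contra hcon
    push Not at hcon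
    have h1 := hoth a hcon.1.symm
    have h2 := hoth b hcon.2.symm
    exact hab (by rw [← h1, ← h2, hmab])
  · intro i hi
    have h1 := hg (m i) x (Finset.mem_insert_self _ _)
    rw [hoth i hi] at h1
    refine lt_of_le_of_ne h1 fun h => hx ?_
    rw [← hr i h]; exact (hm i).1
  · intro y hy
    by_cases h : g y = g x
    · have := hg y x (Finset.mem_insert_self _ _)
      rwa [h] at this
    · have h1 := hy _ h
      have h2 := hg y (m (g y)) (Finset.mem_insert_of_mem (hm _).1)
      omega

include hm in
lemma insert_dom_backward (hD : Dom r S) {e : I}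
    (he : ∀ z ∈ S, ∃ i, i ≠ e ∧ m i = z) {x : T} (hx : Above r m e x)
    (hmax : ∀ y, Above r m e y → r e y ≤ r e x) : x ∉ S ∧ Dom r (insert x S) := by
  constructor
  · intro hxS
    obtain ⟨i, hi, rfl⟩ := he x hxS
    exact lt_irrefl _ (hx i hi)
  · intro y
    by_cases hy : Above r m e y
    · refine ⟨e, fun z hz => ?_⟩
      rcases Finset.mem_insert.1 hz with rfl | hzS
      · exact hmax y hy
      · obtain ⟨i, hi⟩ := hD y
        by_cases hie : i = e
        · subst hie; exact hi z hzS
        · have h1 := hy i hie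
          have h2 := hi _ (hm i).1
          omega
    · unfold Above at hy
      push Not at hy
      obtain ⟨i, hie, hi⟩ := hy
      refine ⟨i, fun z hz => ?_⟩
      rcases Finset.mem_insert.1 hz with rfl | hzS
      · exact hi.trans (hx i hie).le
      · exact hi.trans ((hm i).2 z hzS)

include hm in
lemma above_disjoint (hD : Dom r S) {a b : I} (hab : a ≠ b) {x : T}
    (ha : Above r m a x) (hb : Above r m b x) : False := by
  obtain ⟨i, hi⟩ := hD x
  have h2 := hi _ (hm i).1
  by_cases h : i = a
  · subst h; have := hb i hab; omega
  · have := ha i h; omega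

lemma exists_max_above (e : I) (h : ∃ y, Above r m e y) :
    ∃ x, Above r m e x ∧ ∀ y, Above r m e y → r e y ≤ r e x := by
  classical
  obtain ⟨y, hy⟩ := h
  obtain ⟨x, hx, hx'⟩ := (univ.filter (Above r m e)).exists_max_image (r e) ⟨y, by simpa using hy⟩
  exact ⟨x, by simpa using hx, fun y hy => hx' y (by simpa using hy)⟩

end

section
variable {T I : Type*} [Fintype T] [Fintype I] [DecidableEq T] [DecidableEq I]
  {r : I → T → ℤ} (hr : ∀ i, Function.Injective (r i)) (s : I → T)
  (hs1 : ∀ i y, r i (s i) ≤ r i y)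
  (hs2 : ∀ i j y, j ≠ i → (∀ k, y ≠ s k) → r i y < r i (s j))
  (hsinj : Function.Injective s)

open Classical in
include hr hs1 hs2 hsinj in
/-- A door that is not the outer one lies in exactly two rooms. -/
lemma door_two (h2 : 2 ≤ Fintype.card I) {S : Finset T} (hc : S.card + 1 = Fintype.card I)
    (hD : Dom r S) (hout : ∀ i, S ≠ (univ.erase i).image s) :
    (univ.filter (fun x => x ∉ S ∧ Dom r (insert x S))).card = 2 := by
  have hne : S.Nonempty := by rw [← Finset.card_pos]; omega
  obtain ⟨m, hm⟩ := exists_minmap r S hne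
  obtain ⟨a, b, hab, hmab, hcov⟩ := exists_pair hr hm hc hD
  -- the slack element `s e` always lies above
  have hmm : ∀ i, m i = s i ∨ ∀ k, m i ≠ s k := by
    intro i
    by_contra hcon
    push Not at hcon
    obtain ⟨h1, k, hk⟩ := hcon
    have hki : k ≠ i := by rintro rfl; exact h1 hk
    apply hout i
    apply Finset.eq_of_subset_of_card_le
    · intro z hz
      have hle := (hm i).2 z hz
      have : ∃ l, z = s l := by
        by_contra hl
        push Not at hl
        have := hs2 i k z hki hl
        rw [hk] at hle; omega
      obtain ⟨l, rfl⟩ := this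
      refine Finset.mem_image.2 ⟨l, ?_, rfl⟩
      refine Finset.mem_erase.2 ⟨?_, mem_univ _⟩
      rintro rfl
      exact h1 (hr l (le_antisymm hle (hs1 l _)))
    · rw [Finset.card_image_of_injective _ hsinj, Finset.card_erase_of_mem (mem_univ _),
        Finset.card_univ]; omega
  have hab' : ∀ e, ∃ y, Above r m e y := by
    refine fun e => ⟨s e, fun i hi => ?_⟩
    rcases hmm i with h | h
    · rw [h]
      exact lt_of_le_of_ne (hs1 i _) fun h' => hi (hsinj (hr i h'))
    · exact hs2 i e _ hi.symm h
  obtain ⟨xa, ha1, ha2⟩ := exists_max_above a (hab' a)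
  obtain ⟨xb, hb1, hb2⟩ := exists_max_above b (hab' b)
  rw [Finset.card_eq_two]
  refine ⟨xa, xb, ?_, ?_⟩
  · rintro rfl
    exact above_disjoint hm hD hab ha1 hb1
  · ext x
    simp only [mem_filter, mem_univ, true_and, mem_insert, mem_singleton]
    constructor
    · rintro ⟨hx, hxD⟩
      obtain ⟨e, rfl | rfl, h1, h2⟩ := insert_dom_forward hr hm hc hab hmab hx hxD
      · left; exact hr e (le_antisymm (ha2 _ h1) (h2 _ ha1))
      · right; exact hr e (le_antisymm (hb2 _ h1) (h2 _ hb1))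
    · rintro (rfl | rfl)
      · exact insert_dom_backward hm hD (hcov a (Or.inl rfl)) ha1 ha2
      · exact insert_dom_backward hm hD (hcov b (Or.inr rfl)) hb1 hb2

open Classical in
include hr hs1 hs2 hsinj in
/-- The outer door lies in exactly one room. -/
lemma door_one (hT : ∃ y, ∀ k, y ≠ s k) (i0 : I) :
    (univ.filter (fun x => x ∉ (univ.erase i0).image s ∧
      Dom r (insert x ((univ.erase i0).image s)))).card = 1 := by
  have hnot : ∀ y, y ∉ (univ.erase i0).image s → ∀ j, j ≠ i0 → r j (s j) < r j y := by
    intro y hy j hj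
    refine lt_of_le_of_ne (hs1 j y) fun h => hy ?_
    exact Finset.mem_image.2 ⟨j, by simp [hj], hr j h⟩
  obtain ⟨y0, hy0⟩ := hT
  have hy0' : y0 ∉ (univ.erase i0).image s := by
    intro h
    obtain ⟨k, -, hk⟩ := Finset.mem_image.1 h
    exact hy0 k hk.symm
  obtain ⟨x, hx, hxmax⟩ := (univ.filter (fun y => y ∉ (univ.erase i0).image s)).exists_max_image
    (r i0) ⟨y0, by simpa using hy0'⟩
  have hx' := (Finset.mem_filter.1 hx).2
  have hxmax' : ∀ y, y ∉ (univ.erase i0).image s → r i0 y ≤ r i0 x :=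
    fun y hy => hxmax y (Finset.mem_filter.2 ⟨mem_univ _, hy⟩)
  rw [Finset.card_eq_one]
  refine ⟨x, ?_⟩
  ext z
  rw [Finset.mem_filter, Finset.mem_singleton]
  constructor
  · rintro ⟨-, hz, hD⟩
    refine hr i0 (le_antisymm (hxmax' z hz) ?_)
    obtain ⟨i, hi⟩ := hD x
    by_cases h : i = i0
    · subst h; exact hi z (Finset.mem_insert_self _ _)
    · have h1 := hi (s i) (Finset.mem_insert_of_mem (Finset.mem_image.2 ⟨i, by simp [h], rfl⟩))
      have h2 := hnot x hx' i h
      omega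
  · rintro rfl
    refine ⟨mem_univ _, hx', fun y => ?_⟩
    by_cases hy : y ∈ (univ.erase i0).image s
    · obtain ⟨k, -, rfl⟩ := Finset.mem_image.1 hy
      exact ⟨k, fun w _ => hs1 k w⟩
    · refine ⟨i0, fun w hw => ?_⟩
      rcases Finset.mem_insert.1 hw with rfl | hw
      · exact hxmax' y hy
      · obtain ⟨k, hk, rfl⟩ := Finset.mem_image.1 hw
        have hki : k ≠ i0 := (Finset.mem_erase.1 hk).1
        by_cases hyk : ∀ l, y ≠ s l
        · exact (hs2 i0 k y hki hyk).le
        · push Not at hyk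
          obtain ⟨l, rfl⟩ := hyk
          by_cases hl : l = i0
          · subst hl; exact hs1 _ _
          · exact absurd (Finset.mem_image.2 ⟨l, by simp [hl], rfl⟩) hy

/-- Rooms: at most two doors of the right kind; two if not colourful. -/
lemma room_even (c : T → I) (i0 : I) {S : Finset T} (hS : S.card = Fintype.card I)
    (hnc : S.image c ≠ univ) :
    Even (S.filter (fun x => (S.erase x).image c = univ.erase i0)).card := by
  by_cases hne : (S.filter (fun x => (S.erase x).image c = univ.erase i0)).Nonempty
  swap
  · rw [Finset.not_nonempty_iff_eq_empty.1 hne]; simp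
  obtain ⟨x, hx⟩ := hne
  obtain ⟨hxS, hxc⟩ := Finset.mem_filter.1 hx
  have hinj : ∀ z ∈ S, (S.erase z).image c = univ.erase i0 → Set.InjOn c (S.erase z : Finset T) := by
    intro z hz h
    rw [← Finset.card_image_iff, h, Finset.card_erase_of_mem (mem_univ _),
      Finset.card_erase_of_mem hz, hS, Finset.card_univ]
  have hins : S.image c = insert (c x) (univ.erase i0) := by
    rw [← hxc, ← Finset.image_insert, Finset.insert_erase hxS]
  have hcx : c x ≠ i0 := by
    intro h
    apply hnc
    rw [hins, h, Finset.insert_erase (mem_univ _)]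
  have : c x ∈ (S.erase x).image c := by rw [hxc]; simp [hcx]
  obtain ⟨x', hmemS1, hxx'⟩ := Finset.mem_image.1 this
  obtain ⟨hne, hmemS2⟩ := Finset.mem_erase.1 hmemS1
  have : S.filter (fun x => (S.erase x).image c = univ.erase i0) = {x, x'} := by
    ext z
    rw [Finset.mem_filter, Finset.mem_insert, Finset.mem_singleton]
    constructor
    · rintro ⟨hz, hzc⟩
      by_contra hcon
      push Not at hcon
      apply hne
      exact hinj z hz hzc (by simp [hcon.2.symm, hmemS2]) (by simp [hcon.1.symm, hxS]) hxx'
    · rintro (rfl | rfl)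
      · exact ⟨hxS, hxc⟩
      · refine ⟨hmemS2, ?_⟩
        rw [← hxc]
        ext i
        simp only [Finset.mem_image, Finset.mem_erase]
        constructor
        · rintro ⟨w, ⟨hw1, hw2⟩, rfl⟩
          by_cases hwx : w = x
          · subst hwx; exact ⟨z, ⟨hne, hmemS2⟩, hxx'⟩
          · exact ⟨w, ⟨hwx, hw2⟩, rfl⟩
        · rintro ⟨w, ⟨hw1, hw2⟩, rfl⟩
          by_cases hwx : w = z
          · subst hwx; exact ⟨x, ⟨hne.symm, hxS⟩, hxx'.symm⟩
          · exact ⟨w, ⟨hwx, hw2⟩, rfl⟩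
  rw [this, Finset.card_pair hne.symm]
  exact even_two

open Classical in
include hr hs1 hs2 hsinj in
/-- The lemma of Scarf. -/
theorem scarf (h2 : 2 ≤ Fintype.card I) (hT : ∃ y, ∀ k, y ≠ s k) (c : T → I)
    (hcs : ∀ i, c (s i) = i) :
    ∃ S : Finset T, Dom r S ∧ S.card = Fintype.card I ∧ S.image c = univ := by
  by_contra hcon
  push Not at hcon
  have hI : Nonempty I := Fintype.card_pos_iff.1 (by omega)
  obtain ⟨i0⟩ := hI
  let P : Finset (Finset T × T) := univ.filter (fun p => p.1.card = Fintype.card I ∧ Dom r p.1 ∧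
    p.2 ∈ p.1 ∧ (p.1.erase p.2).image c = univ.erase i0)
  have hPeven : Even P.card := by
    rw [Finset.card_eq_sum_card_image Prod.fst P]
    apply Finset.even_sum
    intro S hS
    obtain ⟨⟨S', x⟩, hp, rfl⟩ := Finset.mem_image.1 hS
    obtain ⟨-, h1, hD, hx, hxc⟩ := Finset.mem_filter.1 hp
    have := room_even c i0 h1 (hcon _ hD h1)
    refine (congrArg (fun n : ℕ => Even n) ?_).mpr this
    refine Finset.card_bij' (fun p _ => p.2) (fun x _ => (S', x)) ?_ ?_ ?_ ?_
    · intro p hp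
      simp only [P, Finset.mem_filter, mem_univ, true_and] at hp ⊢
      obtain ⟨⟨_, _, h3, h4⟩, h5⟩ := hp
      rw [← h5]; exact ⟨h3, h4⟩
    · intro x hx
      simp only [P, Finset.mem_filter, mem_univ, true_and] at hx ⊢
      exact ⟨⟨h1, hD, hx⟩, trivial⟩
    · intro p hp
      have := (Finset.mem_filter.1 hp).2
      ext1
      · exact this.symm
      · rfl
    · intro x hx; rfl
  let O : Finset T := (univ.erase i0).image s
  let F : Finset T → ℕ := fun S' => (univ.filter (fun x => x ∉ S' ∧ Dom r (insert x S'))).card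
  let Dr : Finset (Finset T) := univ.filter (fun S' => S'.card + 1 = Fintype.card I ∧
    S'.image c = univ.erase i0)
  have hPsum : P.card = ∑ S' ∈ Dr, F S' := by
    rw [Finset.card_eq_sum_card_fiberwise (f := fun p : Finset T × T => p.1.erase p.2) (t := Dr)]
    · apply Finset.sum_congr rfl
      intro S' hS'
      obtain ⟨-, hS1, hS2⟩ := Finset.mem_filter.1 hS'
      refine Finset.card_bij' (fun p _ => p.2) (fun x _ => (insert x S', x)) ?_ ?_ ?_ ?_
      · intro p hp
        simp only [P, Finset.mem_filter, mem_univ, true_and] at hp ⊢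
        obtain ⟨⟨h1, h2, h3, h4⟩, rfl⟩ := hp
        refine ⟨by simp, ?_⟩
        rwa [Finset.insert_erase h3]
      · intro x hx
        simp only [P, Finset.mem_filter, mem_univ, true_and] at hx ⊢
        rw [Finset.erase_insert hx.1, Finset.card_insert_of_notMem hx.1]
        exact ⟨⟨hS1, hx.2, Finset.mem_insert_self _ _, hS2⟩, rfl⟩
      · intro p hp
        simp only [P, Finset.mem_filter, mem_univ, true_and] at hp
        obtain ⟨⟨h1, h2, h3, h4⟩, rfl⟩ := hp
        ext1
        · exact Finset.insert_erase h3
        · rfl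
      · intro x hx; rfl
    · intro p hp
      have hp := Finset.mem_coe.1 hp
      simp only [P, Dr, Finset.mem_filter, mem_univ, true_and, Finset.coe_filter,
        Set.mem_ofPred_eq] at hp ⊢
      obtain ⟨h1, h2, h3, h4⟩ := hp
      refine ⟨?_, h4⟩
      rw [Finset.card_erase_add_one h3, h1]
  have hO : O ∈ Dr := by
    simp only [Dr, Finset.mem_filter, mem_univ, true_and]
    constructor
    · rw [Finset.card_image_of_injective _ hsinj, Finset.card_erase_add_one (mem_univ _),
        Finset.card_univ]
    · rw [Finset.image_image]
      have : c ∘ s = id := funext hcs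
      rw [this, Finset.image_id]
  have hodd : Odd P.card := by
    rw [hPsum, ← Finset.add_sum_erase _ _ hO]
    have h1 : F O = 1 := door_one hr s hs1 hs2 hsinj hT i0
    rw [h1]
    apply Odd.add_even odd_one
    apply Finset.even_sum
    intro S' hS'
    obtain ⟨hne, hS'⟩ := Finset.mem_erase.1 hS'
    obtain ⟨-, hS1, hS2⟩ := Finset.mem_filter.1 hS'
    by_cases hD : Dom r S'
    · have : F S' = 2 := by
        apply door_two hr s hs1 hs2 hsinj h2 hS1 hD
        rintro i rfl
        apply hne
        rw [Finset.image_image, show c ∘ s = id from funext hcs, Finset.image_id] at hS2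
        simp only [O]
        rw [hS2]
      rw [this]; exact even_two
    · have : F S' = 0 := by
        simp only [F, Finset.card_eq_zero, Finset.filter_eq_empty_iff]
        rintro x - ⟨-, hx⟩
        exact hD (dom_mono (Finset.subset_insert _ _) hx)
      rw [this]; simp
  exact (Nat.not_even_iff_odd.2 hodd) hPeven

end
end Comb

section Grid
open Finset

/-- Grid version: a finite nonempty family of integer points of the simplex. -/
lemma grid_lemma {I : Type*} [Fintype I] [DecidableEq I] (h2 : 2 ≤ Fintype.card I) (N : ℕ)
    (c : (I → ℕ) → I) :
    ∃ (σ : Finset (I → ℕ)) (C : Finset I), σ.Nonempty ∧ C.Nonempty ∧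
      (∀ x ∈ σ, ∑ i, x i = N) ∧ (∀ i ∈ C, ∃ x ∈ σ, c x = i) ∧
      (∀ y : I → ℕ, ∑ i, y i = N → ∃ i ∈ C, ∀ x ∈ σ, y i ≤ x i) := by
  classical
  let G : Finset (I → ℕ) := Finset.piAntidiag univ N
  have hG : ∀ x : I → ℕ, x ∈ G ↔ ∑ i, x i = N := by
    intro x; simp [G]
  let T := G ⊕ I
  let M : ℕ := Fintype.card G
  let e : G ≃ Fin M := Fintype.equivFin G
  let d : I ≃ Fin (Fintype.card I) := Fintype.equivFin I
  have hle : ∀ (x : G) i, x.1 i ≤ N := by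
    intro x i
    rw [← (hG x.1).1 x.2]
    exact Finset.single_le_sum (f := x.1) (fun _ _ => Nat.zero_le _) (mem_univ i)
  let r : I → T → ℤ := fun i t => match t with
    | Sum.inl x => ((x.1 i * M + (e x : ℕ) : ℕ) : ℤ)
    | Sum.inr j => if j = i then -1 else (((N + 1) * M + (d j : ℕ) : ℕ) : ℤ)
  have hrl : ∀ i (x : G), r i (Sum.inl x) = ((x.1 i * M + (e x : ℕ) : ℕ) : ℤ) := fun _ _ => rfl
  have hrr : ∀ i j, r i (Sum.inr j) =
    if j = i then -1 else (((N + 1) * M + (d j : ℕ) : ℕ) : ℤ) := fun _ _ => rfl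
  have hlow : ∀ i (x : G), x.1 i * M + (e x : ℕ) < (N + 1) * M := by
    intro i x
    have h1 := Nat.mul_le_mul_right M (hle x i)
    have h2 := (e x).2
    nlinarith
  have hcmp : ∀ i (x y : G), r i (Sum.inl x) ≤ r i (Sum.inl y) → x.1 i ≤ y.1 i := by
    intro i x y h
    rw [hrl, hrl, Nat.cast_le] at h
    by_contra hc
    push Not at hc
    have h1 := (e y).2
    have h2 := Nat.mul_le_mul_right M (Nat.succ_le_of_lt hc)
    rw [Nat.succ_mul] at h2
    omega
  have hr : ∀ i, Function.Injective (r i) := by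
    intro i t t' h
    rcases t with x | j <;> rcases t' with y | k
    · have h1 : x.1 i = y.1 i := le_antisymm (hcmp i x y h.le) (hcmp i y x h.ge)
      rw [hrl, hrl, h1, Nat.cast_inj] at h
      have : e x = e y := Fin.ext (by omega)
      rw [e.injective this]
    · rw [hrl, hrr] at h
      have := hlow i x
      split_ifs at h <;> omega
    · rw [hrl, hrr] at h
      have := hlow i y
      split_ifs at h <;> omega
    · rw [hrr, hrr] at h
      by_cases h1 : j = i
      · by_cases h3 : k = i
        · rw [h1, h3]
        · rw [if_pos h1, if_neg h3] at h
          omega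
      · by_cases h3 : k = i
        · rw [if_neg h1, if_pos h3] at h
          omega
        · rw [if_neg h1, if_neg h3] at h
          have : d j = d k := Fin.ext (by omega)
          rw [d.injective this]
  obtain ⟨i1⟩ : Nonempty I := Fintype.card_pos_iff.1 (by omega)
  have hGne : ∃ g : I → ℕ, g ∈ G := ⟨Pi.single i1 N, by rw [hG]; simp⟩
  obtain ⟨g, hg⟩ := hGne
  obtain ⟨S, hD, hcard, hcol⟩ := scarf (r := r) hr (fun i => (Sum.inr i : T))
    (by
      intro i t
      rw [hrr, if_pos rfl]
      rcases t with x | j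
      · rw [hrl]; omega
      · rw [hrr]; split_ifs <;> omega)
    (by
      intro i j y hji hy
      rcases y with x | k
      · rw [hrl, hrr, if_neg hji]
        have := hlow i x
        omega
      · exact absurd rfl (hy k))
    Sum.inr_injective h2 ⟨Sum.inl ⟨g, hg⟩, by simp⟩
    (fun t => match t with
      | Sum.inl x => c x.1
      | Sum.inr j => j) (fun _ => rfl)
  let C : Finset I := univ.filter (fun i => (Sum.inr i : T) ∉ S)
  let σ : Finset (I → ℕ) := (univ.filter (fun x : G => (Sum.inl x : T) ∈ S)).image Subtype.val
  have hσ : ∀ x, x ∈ σ ↔ ∃ h : x ∈ G, (Sum.inl ⟨x, h⟩ : T) ∈ S := by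
    intro x; simp [σ]
  have hdom : ∀ y : I → ℕ, ∑ i, y i = N → ∃ i ∈ C, ∀ x ∈ σ, y i ≤ x i := by
    intro y hy
    obtain ⟨i, hi⟩ := hD (Sum.inl ⟨y, (hG y).2 hy⟩)
    refine ⟨i, ?_, ?_⟩
    · simp only [C, mem_filter, mem_univ, true_and]
      intro h
      have := hi _ h
      rw [hrl, hrr, if_pos rfl] at this
      omega
    · intro x hx
      obtain ⟨h, hS⟩ := (hσ x).1 hx
      exact hcmp i _ _ (hi _ hS)
  have hCne : C.Nonempty := by
    obtain ⟨i, hi, -⟩ := hdom g ((hG g).1 hg)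
    exact ⟨i, hi⟩
  have hcolC : ∀ i ∈ C, ∃ x ∈ σ, c x = i := by
    intro i hi
    have : i ∈ S.image (fun t : T => match t with
      | Sum.inl x => c x.1
      | Sum.inr j => j) := by rw [hcol]; exact mem_univ i
    obtain ⟨t, ht, hti⟩ := Finset.mem_image.1 this
    rcases t with x | j
    · exact ⟨x.1, (hσ _).2 ⟨x.2, ht⟩, hti⟩
    · have hti : j = i := hti
      subst hti
      exact absurd ht (Finset.mem_filter.1 hi).2
  refine ⟨σ, C, ?_, hCne, ?_, hcolC, hdom⟩
  · obtain ⟨i, hi⟩ := hCne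
    obtain ⟨x, hx, -⟩ := hcolC i hi
    exact ⟨x, hx⟩
  · intro x hx
    exact (hG x).1 ((hσ x).1 hx).1

lemma grid_small {I : Type*} [Fintype I] [DecidableEq I] {N : ℕ}
    {σ : Finset (I → ℕ)} {C : Finset I} (hne : σ.Nonempty) (hCne : C.Nonempty)
    (hsum : ∀ x ∈ σ, ∑ i, x i = N)
    (hdom : ∀ y : I → ℕ, ∑ i, y i = N → ∃ i ∈ C, ∀ x ∈ σ, y i ≤ x i) :
    (∀ x ∈ σ, ∀ z ∈ σ, ∀ i, x i ≤ z i + Fintype.card I) ∧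
    (∀ x ∈ σ, ∀ i, i ∉ C → x i ≤ Fintype.card I) := by
  have : ∀ i, ∃ x ∈ σ, ∀ z ∈ σ, x i ≤ z i := fun i => σ.exists_min_image (fun x => x i) hne
  choose w hw hwmin using this
  have hkey : N < ∑ i ∈ C, (w i i + 1) := by
    by_contra hcon
    push Not at hcon
    obtain ⟨i1, hi1⟩ := hCne
    let y0 : I → ℕ := fun i => if i ∈ C then w i i + 1 else 0
    have hy0 : ∑ i, y0 i = ∑ i ∈ C, (w i i + 1) := by
      simp only [y0]
      rw [Finset.sum_ite_mem, Finset.univ_inter]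
    let y : I → ℕ := y0 + Pi.single i1 (N - ∑ i ∈ C, (w i i + 1))
    have hy : ∑ i, y i = N := by
      simp only [y, Pi.add_apply]
      rw [Finset.sum_add_distrib, hy0, Finset.sum_pi_single']
      simp only [mem_univ, if_true]
      omega
    obtain ⟨i, hi, hle⟩ := hdom y hy
    have h1 := hle _ (hw i)
    have h2 : y0 i ≤ y i := by simp [y]
    have h3 : y0 i = w i i + 1 := by simp [y0, hi]
    omega
  rw [Finset.sum_add_distrib, Finset.sum_const, smul_eq_mul, mul_one] at hkey
  have hCc : C.card ≤ Fintype.card I := Finset.card_le_univ C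
  have hsplit : ∀ x ∈ σ, ∑ i ∈ C, x i + ∑ i ∈ Cᶜ, x i = N := by
    intro x hx; rw [Finset.sum_add_sum_compl, hsum x hx]
  have hout : ∀ x ∈ σ, ∀ i, i ∉ C → x i ≤ Fintype.card I := by
    intro x hx i hi
    have h1 : ∑ i ∈ C, w i i ≤ ∑ i ∈ C, x i := Finset.sum_le_sum fun i _ => hwmin i x hx
    have h2 : x i ≤ ∑ i ∈ Cᶜ, x i :=
      Finset.single_le_sum (f := x) (fun _ _ => Nat.zero_le _) (Finset.mem_compl.2 hi)
    have := hsplit x hx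
    omega
  refine ⟨?_, hout⟩
  intro x hx z hz i
  by_cases hi : i ∈ C
  · have h1 : ∑ i ∈ C.erase i, w i i ≤ ∑ i ∈ C.erase i, x i :=
      Finset.sum_le_sum fun i _ => hwmin i x hx
    have h2 := Finset.add_sum_erase C (fun i => w i i) hi
    have h3 := Finset.add_sum_erase C x hi
    have h4 := hsplit x hx
    have h5 := hwmin i z hz
    omega
  · have := hout x hx i hi
    omega

/-- Approximate KKM. -/
lemma kkm_approx {I : Type*} [Fintype I] (h2 : 2 ≤ Fintype.card I) (V : I → Set (I → ℝ))
    (hV : stdSimplex ℝ I ⊆ ⋃ i, V i) (δ : ℝ) (hδ : 0 < δ) :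
    ∃ l ∈ stdSimplex ℝ I, ∀ i, l i ≤ δ ∨ ∃ p ∈ V i, dist p l ≤ δ := by
  classical
  obtain ⟨i1⟩ : Nonempty I := Fintype.card_pos_iff.1 (by omega)
  obtain ⟨N, hN⟩ := exists_nat_gt ((Fintype.card I : ℝ) / δ)
  have hcpos : (0 : ℝ) < Fintype.card I := by exact_mod_cast (by omega : 0 < Fintype.card I)
  have hNpos : (0 : ℝ) < N := lt_trans (by positivity) hN
  have hNδ : (Fintype.card I : ℝ) / N ≤ δ := by
    rw [div_le_iff₀ hNpos]
    rw [div_lt_iff₀ hδ] at hN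
    linarith
  let q : (I → ℕ) → (I → ℝ) := fun x i => (x i : ℝ) / N
  have hq : ∀ x : I → ℕ, ∑ i, x i = N → q x ∈ stdSimplex ℝ I := by
    intro x hx
    refine ⟨fun i => by simp only [q]; positivity, ?_⟩
    simp only [q]
    rw [← Finset.sum_div, ← Nat.cast_sum, hx, div_self hNpos.ne']
  have hex : ∀ x : I → ℕ, ∃ i, (∑ i, x i = N → q x ∈ V i) := by
    intro x
    by_cases hx : ∑ i, x i = N
    · obtain ⟨i, hi⟩ := Set.mem_iUnion.1 (hV (hq x hx))
      exact ⟨i, fun _ => hi⟩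
    · exact ⟨i1, fun h => absurd h hx⟩
  choose c hc using hex
  obtain ⟨σ, C, hne, hCne, hsum, hcol, hdom⟩ := grid_lemma h2 N c
  obtain ⟨hs1, hs2⟩ := grid_small hne hCne hsum hdom
  obtain ⟨z, hz⟩ := hne
  refine ⟨q z, hq z (hsum z hz), fun i => ?_⟩
  by_cases hi : i ∈ C
  · right
    obtain ⟨x, hx, rfl⟩ := hcol i hi
    refine ⟨q x, hc x (hsum x hx), ?_⟩
    rw [dist_pi_le_iff hδ.le]
    intro j
    have h1 : (x j : ℝ) ≤ z j + Fintype.card I := by exact_mod_cast hs1 x hx z hz j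
    have h3 : (z j : ℝ) ≤ x j + Fintype.card I := by exact_mod_cast hs1 z hz x hx j
    refine le_trans ?_ hNδ
    simp only [q]
    rw [Real.dist_eq, ← sub_div, abs_div, abs_of_pos hNpos]
    apply div_le_div_of_nonneg_right _ hNpos.le
    rw [abs_le]; constructor <;> linarith
  · left
    refine le_trans ?_ hNδ
    simp only [q]
    apply div_le_div_of_nonneg_right _ hNpos.le
    exact_mod_cast hs2 z hz i hi

end Grid

open Filter Topology in
/-- A KKM type lemma. -/
lemma kkm {I : Type*} [Fintype I] [Nonempty I] (V : I → Set (I → ℝ))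
    (hcl : ∀ i, IsClosed (V i))
    (hV : stdSimplex ℝ I ⊆ ⋃ i, V i) :
    ∃ l ∈ stdSimplex ℝ I, ∀ i, 0 < l i → l ∈ V i := by
  classical
  by_cases h2 : 2 ≤ Fintype.card I
  · have hex := fun k : ℕ => kkm_approx h2 V hV (1 / ((k : ℝ) + 1)) (by positivity)
    choose u hu hu' using hex
    obtain ⟨l, hl, φ, hφ, hlim⟩ := (isCompact_stdSimplex ℝ I).tendsto_subseq hu
    refine ⟨l, hl, fun i hi => ?_⟩
    have h0 : Tendsto (fun k => 1 / ((φ k : ℝ) + 1)) atTop (𝓝 0) :=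
      tendsto_one_div_add_atTop_nhds_zero_nat.comp hφ.tendsto_atTop
    have hli : Tendsto (fun k => u (φ k) i) atTop (𝓝 (l i)) :=
      ((continuous_apply i).tendsto l).comp hlim
    rw [← (hcl i).closure_eq, Metric.mem_closure_iff]
    intro ε hε
    have e1 := h0.eventually (gt_mem_nhds (half_pos hi))
    have e2 := hli.eventually (lt_mem_nhds (half_lt_self hi))
    have e3 := h0.eventually (gt_mem_nhds (half_pos hε))
    have e4 := (Metric.tendsto_nhds.1 hlim) (ε / 2) (half_pos hε)
    obtain ⟨k, h1, h2, h3, h4⟩ := (e1.and (e2.and (e3.and e4))).exists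
    rcases hu' (φ k) i with h | ⟨p, hp, hpd⟩
    · linarith
    · refine ⟨p, hp, ?_⟩
      have := dist_triangle l (u (φ k)) p
      rw [dist_comm l (u (φ k)), dist_comm (u (φ k)) p] at this
      simp only [Function.comp] at h4
      linarith
  · obtain ⟨i1⟩ := ‹Nonempty I›
    have hsub : Subsingleton I := Fintype.card_le_one_iff_subsingleton.1 (by omega)
    have hmem := single_mem_stdSimplex ℝ i1
    refine ⟨_, hmem, fun i _ => ?_⟩
    obtain ⟨j, hj⟩ := Set.mem_iUnion.1 (hV hmem)
    rwa [Subsingleton.elim i j]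

/-- The Fan–Browder fixed point theorem. -/
theorem browder {E : Type*} [NormedAddCommGroup E] [NormedSpace ℝ E]
    (C : Set E) (hCne : C.Nonempty) (hCconv : Convex ℝ C) (hCcomp : IsCompact C)
    (G : E → Set E) (hGsub : ∀ x ∈ C, G x ⊆ C) (hGconv : ∀ x ∈ C, Convex ℝ (G x))
    (hGne : ∀ x ∈ C, (G x).Nonempty)
    (hGopen : ∀ y ∈ C, IsOpen {x : C | y ∈ G (x : E)}) :
    ∃ x ∈ C, x ∈ G x := by
  classical
  have : CompactSpace C := isCompact_iff_compactSpace.1 hCcomp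
  obtain ⟨t, ht⟩ := isCompact_univ.elim_finite_subcover (fun y : C => {x : C | (y : E) ∈ G (x : E)})
    (fun y => hGopen y y.2) (by
      intro x _
      obtain ⟨y, hy⟩ := hGne x x.2
      exact Set.mem_iUnion.2 ⟨⟨y, hGsub x x.2 hy⟩, hy⟩)
  have htc : ∀ x : C, ∃ y : t, (y.1 : E) ∈ G (x : E) := by
    intro x
    have := ht (Set.mem_univ x)
    simp only [Set.mem_iUnion] at this
    obtain ⟨y, hy, hxy⟩ := this
    exact ⟨⟨y, hy⟩, hxy⟩
  obtain ⟨x0, hx0⟩ := hCne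
  have : Nonempty t := ⟨(htc ⟨x0, hx0⟩).choose⟩
  let p : (t → ℝ) → E := fun l => ∑ i, l i • ((i.1 : C) : E)
  have hp : Continuous p := by fun_prop
  have hpC : ∀ l ∈ stdSimplex ℝ t, p l ∈ C := fun l hl =>
    hCconv.sum_mem (fun i _ => hl.1 i) hl.2 (fun i _ => i.1.2)
  let P : stdSimplex ℝ t → C := fun l => ⟨p l.1, hpC l.1 l.2⟩
  have hP : Continuous P := (hp.comp continuous_subtype_val).subtype_mk _
  let U : t → Set (stdSimplex ℝ t) := fun i => P ⁻¹' {x : C | ((i.1 : C) : E) ∈ G (x : E)}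
  obtain ⟨V, hVU, hVcl, hVsub⟩ := exists_iUnion_eq_closed_subset (u := U)
    (fun i => (hGopen _ i.1.2).preimage hP) (fun _ => Set.toFinite _)
    (by
      rw [Set.eq_univ_iff_forall]
      intro l
      obtain ⟨y, hy⟩ := htc (P l)
      exact Set.mem_iUnion.2 ⟨y, hy⟩)
  obtain ⟨l, hl, hlV⟩ := kkm (fun i => Subtype.val '' V i)
    (fun i => (isClosed_stdSimplex ℝ t).isClosedEmbedding_subtypeVal.isClosedMap _ (hVcl i))
    (by
      intro l hl
      have : (⟨l, hl⟩ : stdSimplex ℝ t) ∈ ⋃ i, V i := by rw [hVU]; trivial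
      obtain ⟨i, hi⟩ := Set.mem_iUnion.1 this
      exact Set.mem_iUnion.2 ⟨i, ⟨_, hi, rfl⟩⟩)
  refine ⟨p l, hpC l hl, ?_⟩
  have hmem : ∀ i, 0 < l i → ((i.1 : C) : E) ∈ G (p l) := by
    intro i hi
    obtain ⟨l', hl', hll⟩ := hlV i hi
    have := hVsub i hl'
    subst hll
    exact this
  have hpeq : p l = ∑ i ∈ Finset.univ.filter (fun i => l i ≠ 0), l i • ((i.1 : C) : E) := by
    simp only [p]
    rw [Finset.sum_filter]
    apply Finset.sum_congr rfl
    intro i _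
    split_ifs with h
    · rfl
    · push Not at h; rw [h, zero_smul]
  have hsum : ∑ i ∈ Finset.univ.filter (fun i => l i ≠ 0), l i = 1 := by
    rw [Finset.sum_filter_ne_zero]; exact hl.2
  have := (hGconv _ (hpC l hl)).sum_mem (t := Finset.univ.filter (fun i => l i ≠ 0))
    (w := l) (z := fun i => ((i.1 : C) : E)) (fun i _ => hl.1 i) hsum
    (fun i hi => hmem i (lt_of_le_of_ne (hl.1 i) (Finset.mem_filter.1 hi).2.symm))
  rwa [← hpeq] at this

end ScarfAux

/-- **Theorem.** Existence of approximate solutions of a quasiequilibrium problem in a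
Banach space: for every `0 < ε < ε₀` there is a point in the closure of the fixed point
set of the enlarged map `K_ε(x) = (K x + B(0,ε)) ∩ C` which solves the equilibrium
problem associated with `K_ε`. -/
theorem approximate_quasiequilibrium_exists
    {E : Type*} [NormedAddCommGroup E] [NormedSpace ℝ E] [CompleteSpace E]
    (C : Set E) (hCne : C.Nonempty) (hCconv : Convex ℝ C) (hCcomp : IsCompact C)
    (K : E → Set E)
    (hKsub : ∀ x ∈ C, K x ⊆ C)
    (hKconv : ∀ x ∈ C, Convex ℝ (K x))
    (hKne : ∀ x ∈ C, (K x).Nonempty)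
    (hKlsc : ∀ A : Set E, IsOpen A → IsOpen {x : C | (K (x : E) ∩ A).Nonempty})
    (f : E → E → ℝ)
    (hflsc : ∀ y ∈ C, LowerSemicontinuousOn (fun x => f x y) C)
    (hfqc : ∀ x ∈ C, QuasiconcaveOn ℝ C (f x))
    (ε₀ : ℝ) (hε₀ : 0 < ε₀)
    (hdiag : ∀ x ∈ C, x ∈ (K x + Metric.ball (0 : E) ε₀) ∩ C → f x x ≤ 0) :
    ∀ ε : ℝ, 0 < ε → ε < ε₀ →
      ∃ x ∈ closure {z | z ∈ C ∧ z ∈ (K z + Metric.ball (0 : E) ε) ∩ C},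
        ∀ y ∈ (K x + Metric.ball (0 : E) ε) ∩ C, f x y ≤ 0 := by
  classical
  intro ε hε hεε
  by_contra hcon
  push Not at hcon
  set F : Set E := closure {z | z ∈ C ∧ z ∈ (K z + Metric.ball (0 : E) ε) ∩ C} with hF
  have hFcl : IsClosed F := isClosed_closure
  have hFC : F ⊆ C := closure_minimal (fun z hz => hz.1) hCcomp.isClosed
  have hfib : ∀ y ∈ C, IsOpen {x : C | y ∈ (K (x : E) + Metric.ball (0 : E) ε) ∩ C} := by
    intro y hy
    have := hKlsc (Metric.ball y ε) Metric.isOpen_ball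
    convert this using 1
    ext x
    constructor
    · rintro ⟨hk, -⟩
      obtain ⟨k, hk, v, hv, hkv⟩ := Set.mem_add.1 hk
      refine ⟨k, hk, ?_⟩
      rw [Metric.mem_ball, dist_eq_norm, ← hkv]
      simpa using hv
    · rintro ⟨k, hk, hkb⟩
      refine ⟨Set.mem_add.2 ⟨k, hk, y - k, ?_, by abel⟩, hy⟩
      rw [Metric.mem_ball, dist_eq_norm] at hkb
      rw [mem_ball_zero_iff, norm_sub_rev]
      exact hkb
  have hKεconv : ∀ x ∈ C, Convex ℝ ((K x + Metric.ball (0 : E) ε) ∩ C) := fun x hx =>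
    ((hKconv x hx).add (convex_ball 0 ε)).inter hCconv
  let G : E → Set E := fun x =>
    {y | y ∈ (K x + Metric.ball (0 : E) ε) ∩ C ∧ (x ∈ F → 0 < f x y)}
  obtain ⟨x, hx, hxG⟩ := ScarfAux.browder C hCne hCconv hCcomp G
    (fun x _ y hy => hy.1.2)
    (by
      intro x hx
      by_cases hxF : x ∈ F
      · have h1 := (hKεconv x hx).inter ((hfqc x hx).convex_gt 0)
        convert h1 using 1
        ext y
        constructor
        · rintro ⟨h, h'⟩
          exact ⟨h, h.2, h' hxF⟩
        · rintro ⟨h, -, h'⟩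
          exact ⟨h, fun _ => h'⟩
      · convert hKεconv x hx using 1
        ext y
        exact ⟨fun h => h.1, fun h => ⟨h, fun h' => absurd h' hxF⟩⟩)
    (by
      intro x hx
      by_cases hxF : x ∈ F
      · obtain ⟨y, hy, hfy⟩ := hcon x hxF
        exact ⟨y, hy, fun _ => hfy⟩
      · obtain ⟨k, hk⟩ := hKne x hx
        refine ⟨k, ⟨Set.mem_add.2 ⟨k, hk, 0, ?_, add_zero k⟩, hKsub x hx hk⟩,
          fun h => absurd h hxF⟩
        simpa using hε)
    (by
      intro y hy
      have h1 := hfib y hy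
      have h2 : IsOpen {x : C | 0 < f (x : E) y} := by
        have := lowerSemicontinuous_restrict_iff.2 (hflsc y hy)
        exact this.isOpen_preimage 0
      have h3 : IsOpen {x : C | (x : E) ∉ F} :=
        (hFcl.preimage continuous_subtype_val).isOpen_compl
      convert h1.inter (h3.union h2) using 1
      ext x
      constructor
      · rintro ⟨h, h'⟩
        refine ⟨h, ?_⟩
        by_cases hxF : (x : E) ∈ F
        · exact Or.inr (h' hxF)
        · exact Or.inl hxF
      · rintro ⟨h, h'⟩
        refine ⟨h, fun hxF => ?_⟩
        rcases h' with h' | h'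
        · exact absurd hxF h'
        · exact h')
  have hxF : x ∈ F := subset_closure ⟨hx, hxG.1⟩
  have h1 := hxG.2 hxF
  have h2 := hdiag x hx ⟨Set.add_subset_add_left (Metric.ball_subset_ball hεε.le) hxG.1.1, hx⟩
  linarith
end

section
/- Let C = [0,4] ⊆ ℝ and let K : C ⇉ C be defined by K(x) = [0,4] if x ∈ [0,2), K(x) = [0,1) if x ∈ [2,3], and K(x) = [0,3) if x ∈ (3,4]. Then the graph {(x,y) ∈ C × C : y ∈ K(x)} is open in C × C, and the set of fixed points {x ∈ C : x ∈ K(x)} equals [0,2). -/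
/-- **Example.** The piecewise-defined set-valued map `K` on `C = [0,4]` has open graph
in `C × C` and its fixed point set is `[0,2)`. -/
theorem example_open_graph_and_fixed_points
    (K : ℝ → Set ℝ)
    (hK1 : ∀ x ∈ Set.Ico (0 : ℝ) 2, K x = Set.Icc 0 4)
    (hK2 : ∀ x ∈ Set.Icc (2 : ℝ) 3, K x = Set.Ico 0 1)
    (hK3 : ∀ x ∈ Set.Ioc (3 : ℝ) 4, K x = Set.Ico 0 3) :
    IsOpen {p : Set.Icc (0 : ℝ) 4 × Set.Icc (0 : ℝ) 4 | (p.2 : ℝ) ∈ K (p.1 : ℝ)} ∧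
    {x | x ∈ Set.Icc (0 : ℝ) 4 ∧ x ∈ K x} = Set.Ico 0 2 := by
  have key : ∀ x y : ℝ, x ∈ Set.Icc (0 : ℝ) 4 → y ∈ Set.Icc (0 : ℝ) 4 →
      (y ∈ K x ↔ (x < 2 ∨ y < 1) ∨ (3 < x ∧ y < 3)) := by
    rintro x y ⟨hx0, hx4⟩ ⟨hy0, hy4⟩
    rcases lt_or_ge x 2 with h | h
    · rw [hK1 x ⟨hx0, h⟩]
      simp [h, hy0, hy4]
    · rcases le_or_gt x 3 with h3 | h3
      · rw [hK2 x ⟨h, h3⟩]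
        simp [not_lt.2 h, not_lt.2 h3, hy0]
      · rw [hK3 x ⟨h3, hx4⟩]
        simp only [Set.mem_Ico, hy0, true_and, not_lt.2 h, false_or, h3]
        exact ⟨Or.inr, fun hh => hh.elim (fun a => by linarith) id⟩
  constructor
  · have e : {p : Set.Icc (0 : ℝ) 4 × Set.Icc (0 : ℝ) 4 | (p.2 : ℝ) ∈ K (p.1 : ℝ)} =
        ({p | (p.1 : ℝ) < 2} ∪ {p | (p.2 : ℝ) < 1}) ∪
          ({p | (3 : ℝ) < p.1} ∩ {p | (p.2 : ℝ) < 3}) := by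
      ext p
      exact key p.1 p.2 p.1.2 p.2.2
    rw [e]
    refine IsOpen.union (IsOpen.union ?_ ?_) (IsOpen.inter ?_ ?_) <;>
      exact isOpen_lt (by fun_prop) (by fun_prop)
  · ext x
    constructor
    · rintro ⟨hx, hk⟩
      rw [key x x hx hx] at hk
      refine ⟨hx.1, ?_⟩
      rcases hk with (h | h) | ⟨h, h'⟩ <;> linarith
    · rintro ⟨h0, h2⟩
      have hx : x ∈ Set.Icc (0 : ℝ) 4 := ⟨h0, by linarith⟩
      exact ⟨hx, (key x x hx hx).2 (Or.inl (Or.inl h2))⟩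
end

section
/- Let X be a topological space, n ∈ ℕ, and F : X ⇉ ℝⁿ a lower semicontinuous set-valued map whose values are open and convex. Then F has open lower sections, i.e., for every y ∈ ℝⁿ the set F⁻¹(y) = {x ∈ X : y ∈ F(x)} is open. -/
/-- A lower semicontinuous set-valued map into `ℝⁿ` with open convex values has open
lower sections. -/
theorem lsc_open_convex_values_open_lower_sections
    {X : Type*} [TopologicalSpace X] (n : ℕ)
    (F : X → Set (EuclideanSpace ℝ (Fin n)))
    (hFlsc : ∀ A : Set (EuclideanSpace ℝ (Fin n)), IsOpen A →
      IsOpen {x | (F x ∩ A).Nonempty})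
    (hFopen : ∀ x, IsOpen (F x))
    (hFconv : ∀ x, Convex ℝ (F x)) :
    ∀ y : EuclideanSpace ℝ (Fin n), IsOpen {x | y ∈ F x} := by
  intro y
  rw [isOpen_iff_mem_nhds]
  intro x hx
  obtain ⟨b, hb1, hb2⟩ := exists_mem_interior_convexHull_affineBasis
    ((hFopen x).mem_nhds hx)
  obtain ⟨ε, hε, hball⟩ := Metric.nhds_basis_closedBall.mem_iff.1
    (mem_interior_iff_mem_nhds.1 hb1)
  have key : ∀ᶠ x' in nhds x, ∀ i, (F x' ∩ Metric.ball (b i) ε).Nonempty := by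
    rw [Filter.eventually_all]
    intro i
    refine (hFlsc _ Metric.isOpen_ball).mem_nhds ?_
    exact ⟨b i, hb2 (subset_convexHull ℝ _ ⟨i, rfl⟩), Metric.mem_ball_self hε⟩
  filter_upwards [key] with x' hx'
  show y ∈ F x'
  by_contra hy
  obtain ⟨f, hf⟩ := geometric_hahn_banach_open_point (hFconv x') (hFopen x') hy
  set w := (InnerProductSpace.toDual ℝ (EuclideanSpace ℝ (Fin n))).symm f with hw
  have hfw : ∀ u, f u = inner ℝ w u := fun u => by
    rw [hw, InnerProductSpace.toDual_symm_apply]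
  have hw0 : w ≠ 0 := by
    intro h0
    obtain ⟨z, hz, -⟩ := hx' 0
    have := hf z hz
    simp [hfw, h0] at this
  have hwn : 0 < ‖w‖ := norm_pos_iff.2 hw0
  have hsub : convexHull ℝ (Set.range b) ⊆ {u | f u < f y + ‖w‖ * ε} := by
    refine convexHull_min ?_ (convex_halfSpace_lt f.isLinear _)
    rintro _ ⟨i, rfl⟩
    obtain ⟨z, hz, hzb⟩ := hx' i
    have h1 := hf z hz
    have h2 : f (b i) - f z ≤ ‖w‖ * ‖b i - z‖ := by
      rw [← map_sub, hfw]
      exact real_inner_le_norm _ _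
    have h3 : ‖b i - z‖ < ε := by
      rw [← dist_eq_norm, dist_comm]; exact hzb
    have h4 := mul_lt_mul_of_pos_left h3 hwn
    show f (b i) < _
    linarith
  have hv : y + (ε / ‖w‖) • w ∈ Metric.closedBall y ε := by
    rw [Metric.mem_closedBall, dist_eq_norm, add_sub_cancel_left, norm_smul,
      Real.norm_of_nonneg (by positivity), div_mul_cancel₀ _ hwn.ne']
  have h5 : f (y + (ε / ‖w‖) • w) < f y + ‖w‖ * ε := hsub (hball hv)
  have h6 : f w = ‖w‖ ^ 2 := by rw [hfw, real_inner_self_eq_norm_sq]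
  rw [map_add, map_smul, h6, smul_eq_mul] at h5
  have h7 : ε / ‖w‖ * ‖w‖ ^ 2 = ‖w‖ * ε := by field_simp
  linarith
end

section
/- Let C = [0,4] ⊆ ℝ and let K : C ⇉ C be defined by K(x) = [0,4] if x ∈ [0,2), K(x) = [0,1) if x ∈ [2,3], and K(x) = [0,3) if x ∈ (3,4]. For ε > 0 define K_ε : C ⇉ C by K_ε(x) = (K(x) + (−ε,ε)) ∩ [0,4]. Then for every ε with 0 < ε < 1, the set of fixed points {x ∈ C : x ∈ K_ε(x)} equals [0,2) ∪ (3, 3+ε). -/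
open Pointwise

/-- **Example.** For the piecewise map `K` on `C = [0,4]` and `0 < ε < 1`, the fixed
point set of the enlarged map `K_ε(x) = (K x + (-ε,ε)) ∩ [0,4]` is `[0,2) ∪ (3, 3+ε)`. -/
theorem example_fixed_points_of_enlargement
    (K : ℝ → Set ℝ)
    (hK1 : ∀ x ∈ Set.Ico (0 : ℝ) 2, K x = Set.Icc 0 4)
    (hK2 : ∀ x ∈ Set.Icc (2 : ℝ) 3, K x = Set.Ico 0 1)
    (hK3 : ∀ x ∈ Set.Ioc (3 : ℝ) 4, K x = Set.Ico 0 3) :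
    ∀ ε : ℝ, 0 < ε → ε < 1 →
      {x | x ∈ Set.Icc (0 : ℝ) 4 ∧ x ∈ (K x + Set.Ioo (-ε) ε) ∩ Set.Icc 0 4}
        = Set.Ico 0 2 ∪ Set.Ioo 3 (3 + ε) := by
  intro ε h0 h1
  ext x
  simp only [Set.mem_setOf_eq, Set.mem_inter_iff, Set.mem_union, Set.mem_add]
  constructor
  · rintro ⟨⟨hx0, hx4⟩, ⟨s, hs, t, ⟨ht1, ht2⟩, hst⟩, -⟩
    rcases lt_or_ge x 2 with h2 | h2
    · exact Or.inl ⟨hx0, h2⟩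
    · rcases le_or_gt x 3 with h3 | h3
      · rw [hK2 x ⟨h2, h3⟩] at hs
        have := hs.2
        linarith
      · rw [hK3 x ⟨h3, hx4⟩] at hs
        have := hs.2
        exact Or.inr ⟨h3, by linarith⟩
  · rintro (⟨hx0, hx2⟩ | ⟨hx3, hxe⟩)
    · have hx : x ∈ Set.Icc (0 : ℝ) 4 := ⟨hx0, by linarith⟩
      refine ⟨hx, ⟨x, ?_, 0, ⟨by linarith, h0⟩, by ring⟩, hx⟩
      rw [hK1 x ⟨hx0, hx2⟩]
      exact hx
    · have hx : x ∈ Set.Icc (0 : ℝ) 4 := ⟨by linarith, by linarith⟩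
      refine ⟨hx, ⟨(x - ε + 3) / 2, ?_, (x + ε - 3) / 2,
        ⟨by linarith, by linarith⟩, by ring⟩, hx⟩
      rw [hK3 x ⟨hx3, hx.2⟩]
      exact ⟨by linarith, by linarith⟩
end

section
/- Let C = [0,4] ⊆ ℝ, let K : C ⇉ C be defined by K(x) = [0,4] if x ∈ [0,2), K(x) = [0,1) if x ∈ [2,3], and K(x) = [0,3) if x ∈ (3,4], let f(x,y) = y − x, and for ε > 0 define K_ε : C ⇉ C by K_ε(x) = (K(x) + (−ε,ε)) ∩ [0,4]. Then for every ε with 0 < ε < 1, the point x_ε = 3 + ε belongs to the closure of the set {x ∈ C : x ∈ K_ε(x)}, one has K_ε(x_ε) = [0, 3+ε), and f(x_ε, y) ≤ 0 for all y ∈ K_ε(x_ε). -/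
open Pointwise

/-- **Example.** For `0 < ε < 1`, the point `x_ε = 3 + ε` lies in the closure of the
fixed point set of `K_ε(x) = (K x + (-ε,ε)) ∩ [0,4]`, satisfies
`K_ε(x_ε) = [0, 3+ε)`, and solves the equilibrium problem for `f(x,y) = y - x`. -/
theorem example_approximate_solution
    (K : ℝ → Set ℝ)
    (hK1 : ∀ x ∈ Set.Ico (0 : ℝ) 2, K x = Set.Icc 0 4)
    (hK2 : ∀ x ∈ Set.Icc (2 : ℝ) 3, K x = Set.Ico 0 1)
    (hK3 : ∀ x ∈ Set.Ioc (3 : ℝ) 4, K x = Set.Ico 0 3)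
    (f : ℝ → ℝ → ℝ) (hf : ∀ x y, f x y = y - x) :
    ∀ ε : ℝ, 0 < ε → ε < 1 →
      (3 + ε) ∈ closure {x | x ∈ Set.Icc (0 : ℝ) 4 ∧
          x ∈ (K x + Set.Ioo (-ε) ε) ∩ Set.Icc 0 4} ∧
      (K (3 + ε) + Set.Ioo (-ε) ε) ∩ Set.Icc 0 4 = Set.Ico 0 (3 + ε) ∧
      ∀ y ∈ (K (3 + ε) + Set.Ioo (-ε) ε) ∩ Set.Icc (0 : ℝ) 4, f (3 + ε) y ≤ 0 := by
  intro ε h0 h1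
  have key : ∀ x ∈ Set.Ioc (3 : ℝ) 4,
      (K x + Set.Ioo (-ε) ε) ∩ Set.Icc 0 4 = Set.Ico 0 (3 + ε) := by
    intro x hx
    rw [hK3 x hx]
    ext y
    constructor
    · rintro ⟨⟨a, ha, t, ht, rfl⟩, hy⟩
      have h2 := ha.2
      have h3 := ht.2
      exact ⟨hy.1, by dsimp only; linarith⟩
    · rintro ⟨hy0, hy1⟩
      have hp : 0 < 3 + ε := by linarith
      refine ⟨Set.mem_add.2 ⟨3 * y / (3 + ε), ⟨by positivity, ?_⟩, ε * y / (3 + ε),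
        ⟨?_, ?_⟩, ?_⟩, hy0, by linarith⟩
      · rw [div_lt_iff₀ hp]; linarith
      · have : 0 ≤ ε * y / (3 + ε) := by positivity
        linarith
      · rw [div_lt_iff₀ hp]; exact mul_lt_mul_of_pos_left hy1 h0
      · field_simp
  have hx : 3 + ε ∈ Set.Ioc (3 : ℝ) 4 := ⟨by linarith, by linarith⟩
  refine ⟨?_, key _ hx, ?_⟩
  · have hsub : Set.Ioo (3 : ℝ) (3 + ε) ⊆ {x | x ∈ Set.Icc (0 : ℝ) 4 ∧
          x ∈ (K x + Set.Ioo (-ε) ε) ∩ Set.Icc 0 4} := by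
      rintro x ⟨hx3, hxe⟩
      refine ⟨⟨by linarith, by linarith⟩, ?_⟩
      rw [key x ⟨hx3, by linarith⟩]
      exact ⟨by linarith, hxe⟩
    apply closure_mono hsub
    rw [closure_Ioo (by linarith)]
    exact ⟨by linarith, le_refl _⟩
  · intro y hy
    rw [key _ hx] at hy
    rw [hf]
    have := hy.2
    linarith
end
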